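/- arXiv:2408.01226 — 2 statements merged into one kernel-verified Lean document; each statement's English description precedes it below -/
import Mathlib

section
/- Every series-parallel graph G admits a canonical decomposition: if G is an S-graph then there is a unique sequence G_1,...,G_k (k ≥ 2) of P-graphs with G = G_1 ∘ ... ∘ G_k; if G is a P-graph then either G is a single edge or there is a unique nonempty finite set {G_1,...,G_k} (k ≥ 2) of single edges and S-graphs with G = G_1 ∥ ... ∥ G_k. -/
/-- A graph of sort `{1,2}`: binary labeled edges and two distinguished
sources. -/
structure G2 (L : Type) where
  V : Type
  E : Type
  att : E → V × V
  lab : E → L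
  s1 : V
  s2 : V

/-- An isomorphism of graphs of sort `{1,2}`. -/
structure GIso {L : Type} (G H : G2 L) where
  vEquiv : G.V ≃ H.V
  eEquiv : G.E ≃ H.E
  att_comm : ∀ e, H.att (eEquiv e) = (vEquiv (G.att e).1, vEquiv (G.att e).2)
  lab_comm : ∀ e, H.lab (eEquiv e) = G.lab e
  s1_comm : vEquiv G.s1 = H.s1
  s2_comm : vEquiv G.s2 = H.s2

/-- The single-edge graph `b₁,₂`. -/
def edgeG {L : Type} (b : L) : G2 L where
  V := Bool
  E := Unit
  att := fun _ => (false, true)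
  lab := fun _ => b
  s1 := false
  s2 := true

/-- The reversed single-edge graph `b₂,₁`. -/
def edgeRG {L : Type} (b : L) : G2 L where
  V := Bool
  E := Unit
  att := fun _ => (true, false)
  lab := fun _ => b
  s1 := false
  s2 := true

/-- Gluing relation for parallel composition: identify the two 1-sources and
the two 2-sources. -/
def parRel {L : Type} (G H : G2 L) : (G.V ⊕ H.V) → (G.V ⊕ H.V) → Prop :=
  fun a b => (a = Sum.inl G.s1 ∧ b = Sum.inr H.s1) ∨
             (a = Sum.inl G.s2 ∧ b = Sum.inr H.s2)

/-- Parallel composition of graphs of sort `{1,2}`. -/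
def parG {L : Type} (G H : G2 L) : G2 L where
  V := Quot (parRel G H)
  E := G.E ⊕ H.E
  att := fun e =>
    match e with
    | Sum.inl e => (Quot.mk _ (Sum.inl (G.att e).1), Quot.mk _ (Sum.inl (G.att e).2))
    | Sum.inr e => (Quot.mk _ (Sum.inr (H.att e).1), Quot.mk _ (Sum.inr (H.att e).2))
  lab := Sum.elim G.lab H.lab
  s1 := Quot.mk _ (Sum.inl G.s1)
  s2 := Quot.mk _ (Sum.inl G.s2)

/-- Gluing relation for serial composition: identify the 2-source of the first
graph with the 1-source of the second. -/
def serRel {L : Type} (G H : G2 L) : (G.V ⊕ H.V) → (G.V ⊕ H.V) → Prop :=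
  fun a b => a = Sum.inl G.s2 ∧ b = Sum.inr H.s1

/-- Serial composition of graphs of sort `{1,2}`. -/
def serG {L : Type} (G H : G2 L) : G2 L where
  V := Quot (serRel G H)
  E := G.E ⊕ H.E
  att := fun e =>
    match e with
    | Sum.inl e => (Quot.mk _ (Sum.inl (G.att e).1), Quot.mk _ (Sum.inl (G.att e).2))
    | Sum.inr e => (Quot.mk _ (Sum.inr (H.att e).1), Quot.mk _ (Sum.inr (H.att e).2))
  lab := Sum.elim G.lab H.lab
  s1 := Quot.mk _ (Sum.inl G.s1)
  s2 := Quot.mk _ (Sum.inr H.s2)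

/-- Series-parallel graphs: generated from single edges `b₁,₂` by parallel and
serial composition, closed under isomorphism. -/
inductive IsSP {L : Type} : G2 L → Prop
  | edge (b : L) : IsSP (edgeG b)
  | par {G H : G2 L} : IsSP G → IsSP H → IsSP (parG G H)
  | ser {G H : G2 L} : IsSP G → IsSP H → IsSP (serG G H)
  | iso {G H : G2 L} : IsSP G → GIso G H → IsSP H

/-- Disoriented series-parallel graphs: also generated from reversed edges
`b₂,₁`. -/
inductive IsDSP {L : Type} : G2 L → Prop
  | edge (b : L) : IsDSP (edgeG b)
  | redge (b : L) : IsDSP (edgeRG b)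
  | par {G H : G2 L} : IsDSP G → IsDSP H → IsDSP (parG G H)
  | ser {G H : G2 L} : IsDSP G → IsDSP H → IsDSP (serG G H)
  | iso {G H : G2 L} : IsDSP G → GIso G H → IsDSP H

/-- `G` is a single-edge graph (up to isomorphism). -/
def IsSingleEdge {L : Type} (G : G2 L) : Prop :=
  ∃ b : L, Nonempty (GIso G (edgeG b))

/-- `G` is a P-graph: a series-parallel graph that is ∘-atomic. -/
def PGraph {L : Type} (G : G2 L) : Prop :=
  IsSP G ∧ ∀ G₁ G₂ : G2 L, IsSP G₁ → IsSP G₂ → ¬ Nonempty (GIso G (serG G₁ G₂))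

/-- Left-associated serial composition of a head graph with a list. -/
def serFold {L : Type} (g : G2 L) : List (G2 L) → G2 L
  | [] => g
  | h :: t => serFold (serG g h) t

/-- Left-associated parallel composition of a head graph with a list. -/
def parFold {L : Type} (g : G2 L) : List (G2 L) → G2 L
  | [] => g
  | h :: t => parFold (parG g h) t

/-!
Serial case: a series-parallel graph is ∘-atomic exactly when it has no cut vertex, that is, no
inner vertex comparable (for reachability) with every edge. The first joint of `P ∘ A` with `P`
∘-atomic is the least cut vertex, so it is preserved by isomorphisms, and with it the two factors;
uniqueness follows by cancelling one factor at a time.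

Parallel case: link two edges when they share an inner vertex. In a single edge and in an S-graph
all edges are linked: a directed path is a chain of links, and every edge lies on a directed path
through the cut vertex. In `G ∥ H` no edge of `G` is linked to an edge of `H`. Hence the components
of a parallel decomposition are the classes of linked edges, which depend only on the graph.
-/

section Functions

variable {α β ι ι' γ : Type*}

theorem exists_equiv_of_range_eq {f : α → γ} {g : β → γ} (hf : f.Injective) (hg : g.Injective)
    (h : Set.range f = Set.range g) : ∃ e : α ≃ β, ∀ a, g (e a) = f a :=
  ⟨(Equiv.ofInjective f hf).trans ((Equiv.setCongr h).trans (Equiv.ofInjective g hg).symm),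
    fun _ => Equiv.apply_ofInjective_symm hg _⟩

theorem exists_equiv_of_ker_eq {c : γ → ι} {c' : γ → ι'} (hc : c.Surjective) (hc' : c'.Surjective)
    (h : Setoid.ker c = Setoid.ker c') : ∃ e : ι ≃ ι', ∀ a, e (c a) = c' a := by
  let q := Setoid.quotientKerEquivOfSurjective c hc
  let q' := Setoid.quotientKerEquivOfSurjective c' hc'
  refine ⟨q.symm.trans ((Quotient.congrRight fun a b => by rw [h]).trans q'), fun a => ?_⟩
  have hq : q.symm (c a) = Quotient.mk _ a := q.symm_apply_eq.2 rfl
  simp only [Equiv.trans_apply, hq]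
  rfl

theorem range_comp_inl_inr_of_isLeft_eq {α' β' : Type*} (φ : α ⊕ β ≃ α' ⊕ β')
    (h : ∀ x, (φ x).isLeft = x.isLeft) :
    Set.range (φ ∘ Sum.inl) = Set.range Sum.inl ∧ Set.range (φ ∘ Sum.inr) = Set.range Sum.inr := by
  have isLeft_symm (y : α' ⊕ β') : (φ.symm y).isLeft = y.isLeft := by
    rw [← h, φ.apply_symm_apply]
  constructor
  · simp only [Set.range_comp, φ.image_eq_preimage_symm, Set.range_inl, Set.preimage_ofPred_eq,
      isLeft_symm]
  · simp only [Set.range_comp, φ.image_eq_preimage_symm, Set.range_inr, Set.preimage_ofPred_eq,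
      ← Sum.not_isLeft, isLeft_symm]

end Functions

variable {L : Type} {A B G H K P Q : G2 L}

/-! ### Isomorphisms and embeddings -/

namespace GIso

/-- The identity isomorphism. -/
def refl (G : G2 L) : GIso G G :=
  ⟨Equiv.refl _, Equiv.refl _, fun _ => rfl, fun _ => rfl, rfl, rfl⟩

/-- The inverse isomorphism. -/
def symm (f : GIso G H) : GIso H G where
  vEquiv := f.vEquiv.symm
  eEquiv := f.eEquiv.symm
  att_comm e := by
    obtain ⟨e, rfl⟩ := f.eEquiv.surjective e
    simp [f.att_comm]
  lab_comm e := by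
    obtain ⟨e, rfl⟩ := f.eEquiv.surjective e
    simp [f.lab_comm]
  s1_comm := f.vEquiv.symm_apply_eq.2 f.s1_comm.symm
  s2_comm := f.vEquiv.symm_apply_eq.2 f.s2_comm.symm

/-- Composition of isomorphisms. -/
def trans (f : GIso G H) (g : GIso H K) : GIso G K where
  vEquiv := f.vEquiv.trans g.vEquiv
  eEquiv := f.eEquiv.trans g.eEquiv
  att_comm e := by simp [g.att_comm, f.att_comm]
  lab_comm e := by simp [g.lab_comm, f.lab_comm]
  s1_comm := by simp [f.s1_comm, g.s1_comm]
  s2_comm := by simp [f.s2_comm, g.s2_comm]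

end GIso

/-- The relation of being isomorphic. -/
def G2.Isomorphic (G H : G2 L) : Prop :=
  Nonempty (GIso G H)

local infix:50 " ≅ᵍ " => G2.Isomorphic

namespace G2.Isomorphic

theorem refl (G : G2 L) : G ≅ᵍ G :=
  ⟨GIso.refl G⟩

theorem symm : G ≅ᵍ H → H ≅ᵍ G
  | ⟨f⟩ => ⟨f.symm⟩

theorem trans : G ≅ᵍ H → H ≅ᵍ K → G ≅ᵍ K
  | ⟨f⟩, ⟨g⟩ => ⟨f.trans g⟩

end G2.Isomorphic

/-- An embedding of labeled graphs; it need not send sources to sources. -/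
structure GEmb (A G : G2 L) where
  vMap : A.V → G.V
  eMap : A.E → G.E
  vMap_injective : vMap.Injective
  eMap_injective : eMap.Injective
  att_comm : ∀ e, G.att (eMap e) = (vMap (A.att e).1, vMap (A.att e).2)
  lab_comm : ∀ e, G.lab (eMap e) = A.lab e

/-- An isomorphism seen as an embedding. -/
def GIso.toGEmb (f : GIso G H) : GEmb G H :=
  ⟨f.vEquiv, f.eEquiv, f.vEquiv.injective, f.eEquiv.injective, f.att_comm, f.lab_comm⟩

/-- Composition of embeddings. -/
def GEmb.comp (g : GEmb B G) (f : GEmb A B) : GEmb A G where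
  vMap := g.vMap ∘ f.vMap
  eMap := g.eMap ∘ f.eMap
  vMap_injective := g.vMap_injective.comp f.vMap_injective
  eMap_injective := g.eMap_injective.comp f.eMap_injective
  att_comm e := by simp [g.att_comm, f.att_comm]
  lab_comm e := by simp [g.lab_comm, f.lab_comm]

/-! ### Reachability and two-terminal graphs -/

namespace G2

/-- Directed reachability between vertices. -/
def Reach (G : G2 L) : G.V → G.V → Prop :=
  Relation.ReflTransGen fun a b => ∃ e, (G.att e).1 = a ∧ (G.att e).2 = b

theorem reach_edge (G : G2 L) (e : G.E) : G.Reach (G.att e).1 (G.att e).2 :=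
  .single ⟨e, rfl, rfl⟩

theorem Reach.map {f : G.V → H.V} (hf : ∀ e, H.Reach (f (G.att e).1) (f (G.att e).2)) {a b : G.V}
    (h : G.Reach a b) : H.Reach (f a) (f b) := by
  refine Relation.ReflTransGen.lift' f ?_ _ _ h
  rintro _ _ ⟨e, rfl, rfl⟩
  exact hf e

/-- Two-terminal directed graphs: every vertex lies on a directed path from the 1-source to the
2-source, the sources are distinct, no edge enters the 1-source and no edge leaves the 2-source. -/
structure IsTwoTerminal (G : G2 L) : Prop where
  s1_ne_s2 : G.s1 ≠ G.s2
  reach_from_s1 : ∀ v, G.Reach G.s1 v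
  reach_to_s2 : ∀ v, G.Reach v G.s2
  head_ne_s1 : ∀ e, (G.att e).2 ≠ G.s1
  tail_ne_s2 : ∀ e, (G.att e).1 ≠ G.s2

end G2

theorem GEmb.reach (f : GEmb A G) {a b : A.V} (h : A.Reach a b) :
    G.Reach (f.vMap a) (f.vMap b) :=
  h.map fun e => by simpa only [f.att_comm] using G.reach_edge (f.eMap e)

theorem GIso.reach_iff (f : GIso G H) {a b : G.V} :
    H.Reach (f.vEquiv a) (f.vEquiv b) ↔ G.Reach a b := by
  refine ⟨fun h => ?_, f.toGEmb.reach⟩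
  simpa [toGEmb, symm] using f.symm.toGEmb.reach h

namespace G2.IsTwoTerminal

theorem eq_s1_or_exists_head_eq (hG : G.IsTwoTerminal) (v : G.V) :
    v = G.s1 ∨ ∃ e, (G.att e).2 = v :=
  (hG.reach_from_s1 v).cases_tail.imp_right fun ⟨_, _, e, _, he⟩ => ⟨e, he⟩

theorem eq_s2_or_exists_tail_eq (hG : G.IsTwoTerminal) (v : G.V) :
    v = G.s2 ∨ ∃ e, (G.att e).1 = v :=
  (hG.reach_to_s2 v).cases_head.imp_right fun ⟨_, ⟨e, he, _⟩, _⟩ => ⟨e, he⟩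

theorem nonempty_edges (hG : G.IsTwoTerminal) : Nonempty G.E :=
  have ⟨e, _⟩ := (hG.eq_s1_or_exists_head_eq G.s2).resolve_left hG.s1_ne_s2.symm
  ⟨e⟩

theorem eq_s1_of_reach (hG : G.IsTwoTerminal) {v : G.V} (h : G.Reach v G.s1) : v = G.s1 := by
  obtain h | ⟨_, _, e, _, he⟩ := h.cases_tail
  · exact h.symm
  · exact absurd he (hG.head_ne_s1 e)

theorem eq_s2_of_reach (hG : G.IsTwoTerminal) {v : G.V} (h : G.Reach G.s2 v) : v = G.s2 := by
  obtain h | ⟨_, ⟨e, he, _⟩, _⟩ := h.cases_head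
  · exact h.symm
  · exact absurd he (hG.tail_ne_s2 e)

theorem of_iso (hG : G.IsTwoTerminal) (f : GIso G H) : H.IsTwoTerminal where
  s1_ne_s2 := by simpa [← f.s1_comm, ← f.s2_comm] using hG.s1_ne_s2
  reach_from_s1 := f.vEquiv.forall_congr_right.1 fun v => by
    simpa only [← f.s1_comm, f.reach_iff] using hG.reach_from_s1 v
  reach_to_s2 := f.vEquiv.forall_congr_right.1 fun v => by
    simpa only [← f.s2_comm, f.reach_iff] using hG.reach_to_s2 v
  head_ne_s1 := f.eEquiv.forall_congr_right.1 fun e => by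
    simpa [f.att_comm, ← f.s1_comm] using hG.head_ne_s1 e
  tail_ne_s2 := f.eEquiv.forall_congr_right.1 fun e => by
    simpa [f.att_comm, ← f.s2_comm] using hG.tail_ne_s2 e

end G2.IsTwoTerminal

theorem isTwoTerminal_edgeG (b : L) : (edgeG b).IsTwoTerminal where
  s1_ne_s2 := Bool.false_ne_true
  reach_from_s1
    | false => .refl
    | true => (edgeG b).reach_edge ()
  reach_to_s2
    | false => (edgeG b).reach_edge ()
    | true => .refl
  head_ne_s1 _ := Bool.false_ne_true.symm
  tail_ne_s2 _ := Bool.false_ne_true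

theorem GEmb.range_vMap (f : GEmb A G) (hA : A.IsTwoTerminal) :
    Set.range f.vMap = insert (f.vMap A.s1) ((fun e => (G.att e).2) '' Set.range f.eMap) := by
  ext v
  constructor
  · rintro ⟨x, rfl⟩
    obtain rfl | ⟨e, rfl⟩ := hA.eq_s1_or_exists_head_eq x
    · exact .inl rfl
    · exact .inr ⟨_, ⟨e, rfl⟩, by simp only [f.att_comm]⟩
  · rintro (rfl | ⟨_, ⟨e, rfl⟩, rfl⟩)
    · exact ⟨_, rfl⟩
    · exact ⟨(A.att e).2, by simp only [f.att_comm]⟩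

theorem GEmb.isomorphic_of_range_eq (f : GEmb A G) (g : GEmb B G) (hA : A.IsTwoTerminal)
    (hB : B.IsTwoTerminal) (h1 : f.vMap A.s1 = g.vMap B.s1) (h2 : f.vMap A.s2 = g.vMap B.s2)
    (hE : Set.range f.eMap = Set.range g.eMap) : A ≅ᵍ B := by
  have hV : Set.range f.vMap = Set.range g.vMap := by
    rw [f.range_vMap hA, g.range_vMap hB, h1, hE]
  obtain ⟨v, hv⟩ := exists_equiv_of_range_eq f.vMap_injective g.vMap_injective hV
  obtain ⟨e, he⟩ := exists_equiv_of_range_eq f.eMap_injective g.eMap_injective hE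
  refine ⟨⟨v, e, fun x => ?_, fun x => ?_, ?_, ?_⟩⟩
  · have h := g.att_comm (e x)
    rw [he, f.att_comm, ← hv, ← hv, Prod.mk_inj] at h
    exact Prod.ext (g.vMap_injective h.1.symm) (g.vMap_injective h.2.symm)
  · rw [← g.lab_comm, he, f.lab_comm]
  · exact g.vMap_injective ((hv _).trans h1)
  · exact g.vMap_injective ((hv _).trans h2)

/-! ### Serial composition -/

namespace serG

/-- The inclusion of the left factor's vertices in a serial composition. -/
def inl (G H : G2 L) (x : G.V) : (serG G H).V :=
  Quot.mk _ (Sum.inl x)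

/-- The inclusion of the right factor's vertices in a serial composition. -/
def inr (G H : G2 L) (y : H.V) : (serG G H).V :=
  Quot.mk _ (Sum.inr y)

theorem inl_s2 (G H : G2 L) : inl G H G.s2 = inr G H H.s1 :=
  Quot.sound ⟨rfl, rfl⟩

@[elab_as_elim]
theorem cases {motive : (serG G H).V → Prop} (inl : ∀ x, motive (inl G H x))
    (inr : ∀ y, motive (inr G H y)) (v : (serG G H).V) : motive v :=
  Quot.ind (fun | .inl x => inl x | .inr y => inr y) v

/-- The map out of a serial composition given by compatible maps on its factors. -/
def lift {α : Type*} (f : G.V → α) (g : H.V → α) (h : f G.s2 = g H.s1) : (serG G H).V → α :=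
  Quot.lift (Sum.elim f g) (by rintro _ _ ⟨rfl, rfl⟩; exact h)

/-- The retraction onto the left factor, which collapses the right factor to the joint. -/
def retractLeft (G H : G2 L) : (serG G H).V → G.V :=
  lift id (fun _ => G.s2) rfl

/-- The retraction onto the right factor, which collapses the left factor to the joint. -/
def retractRight (G H : G2 L) : (serG G H).V → H.V :=
  lift (fun _ => H.s1) id rfl

/-- The left factor of a serial composition as a subgraph. -/
def embLeft (G H : G2 L) : GEmb G (serG G H) where
  vMap := inl G H
  eMap := Sum.inl
  vMap_injective _ _ h := congrArg (retractLeft G H) h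
  eMap_injective := Sum.inl_injective
  att_comm _ := rfl
  lab_comm _ := rfl

/-- The right factor of a serial composition as a subgraph. -/
def embRight (G H : G2 L) : GEmb H (serG G H) where
  vMap := inr G H
  eMap := Sum.inr
  vMap_injective _ _ h := congrArg (retractRight G H) h
  eMap_injective := Sum.inr_injective
  att_comm _ := rfl
  lab_comm _ := rfl

theorem reach_retractLeft {a b : (serG G H).V} (h : (serG G H).Reach a b) :
    G.Reach (retractLeft G H a) (retractLeft G H b) := by
  refine h.map ?_
  rintro (e | e)
  · exact G.reach_edge e
  · exact .refl

theorem reach_retractRight {a b : (serG G H).V} (h : (serG G H).Reach a b) :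
    H.Reach (retractRight G H a) (retractRight G H b) := by
  refine h.map ?_
  rintro (e | e)
  · exact .refl
  · exact H.reach_edge e

theorem reach_inl_joint (hG : G.IsTwoTerminal) (x : G.V) :
    (serG G H).Reach (inl G H x) (inl G H G.s2) :=
  (embLeft G H).reach (hG.reach_to_s2 x)

theorem reach_joint_inr (hH : H.IsTwoTerminal) (y : H.V) :
    (serG G H).Reach (inl G H G.s2) (inr G H y) := by
  rw [inl_s2]
  exact (embRight G H).reach (hH.reach_from_s1 y)

theorem eq_joint_of_reach (hG : G.IsTwoTerminal) (hH : H.IsTwoTerminal) {v : (serG G H).V}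
    (hv : (serG G H).Reach (inl G H G.s2) v) (hv' : (serG G H).Reach v (inl G H G.s2)) :
    v = inl G H G.s2 := by
  cases v using serG.cases with
  | inl x => exact congrArg (inl G H) (hG.eq_s2_of_reach (reach_retractLeft hv))
  | inr y =>
    rw [inl_s2]
    exact congrArg (inr G H) (hH.eq_s1_of_reach (reach_retractRight hv'))

theorem reach_head_joint_iff (hG : G.IsTwoTerminal) (hH : H.IsTwoTerminal) (e : (serG G H).E) :
    (serG G H).Reach ((serG G H).att e).2 (inl G H G.s2) ↔ e.isLeft := by
  obtain e | e := e
  · exact iff_of_true (reach_inl_joint hG _) rfl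
  · refine iff_of_false (fun h => hH.head_ne_s1 e ?_) Bool.false_ne_true
    exact hH.eq_s1_of_reach (reach_retractRight h)

theorem isTwoTerminal (hG : G.IsTwoTerminal) (hH : H.IsTwoTerminal) :
    (serG G H).IsTwoTerminal where
  s1_ne_s2 h := hG.s1_ne_s2 (congrArg (retractLeft G H) h)
  reach_from_s1 v := by
    have reach_left (x : G.V) : (serG G H).Reach (serG G H).s1 (inl G H x) :=
      (embLeft G H).reach (hG.reach_from_s1 x)
    cases v using serG.cases with
    | inl x => exact reach_left x
    | inr y => exact (reach_left G.s2).trans (reach_joint_inr hH y)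
  reach_to_s2 v := by
    cases v using serG.cases with
    | inl x => exact (reach_inl_joint hG x).trans (reach_joint_inr hH H.s2)
    | inr y => exact (embRight G H).reach (hH.reach_to_s2 y)
  head_ne_s1 := by
    rintro (e | e) h
    · exact hG.head_ne_s1 e (congrArg (retractLeft G H) h)
    · exact hG.s1_ne_s2 (congrArg (retractLeft G H) h).symm
  tail_ne_s2 := by
    rintro (e | e) h
    · exact hH.s1_ne_s2 (congrArg (retractRight G H) h)
    · exact hH.tail_ne_s2 e (congrArg (retractRight G H) h)

/-- Serial composition respects isomorphism. -/
def congr {A A' B B' : G2 L} (f : GIso A A') (g : GIso B B') :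
    GIso (serG A B) (serG A' B') where
  vEquiv := Quot.congr (Equiv.sumCongr f.vEquiv g.vEquiv) (by
    rintro (a | a) (b | b) <;> simp [serRel, ← f.s2_comm, ← g.s1_comm])
  eEquiv := Equiv.sumCongr f.eEquiv g.eEquiv
  att_comm
    | .inl e => congrArg (Prod.map (inl A' B') (inl A' B')) (f.att_comm e)
    | .inr e => congrArg (Prod.map (inr A' B') (inr A' B')) (g.att_comm e)
  lab_comm
    | .inl e => f.lab_comm e
    | .inr e => g.lab_comm e
  s1_comm := congrArg (inl A' B') f.s1_comm
  s2_comm := congrArg (inr A' B') g.s2_comm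

/-- Serial composition is associative up to isomorphism. -/
def assoc (A B C : G2 L) : GIso (serG (serG A B) C) (serG A (serG B C)) where
  vEquiv :=
    { toFun := lift (lift (inl A (serG B C)) (inr A (serG B C) ∘ inl B C) (inl_s2 A (serG B C)))
        (inr A (serG B C) ∘ inr B C) (congrArg (inr A (serG B C)) (inl_s2 B C))
      invFun := lift (inl (serG A B) C ∘ inl A B)
        (lift (inl (serG A B) C ∘ inr A B) (inr (serG A B) C) (inl_s2 (serG A B) C))
        (congrArg (inl (serG A B) C) (inl_s2 A B))
      left_inv := by rintro ⟨⟨⟨a | b⟩⟩ | c⟩ <;> rfl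
      right_inv := by rintro ⟨a | ⟨⟨b | c⟩⟩⟩ <;> rfl }
  eEquiv := Equiv.sumAssoc _ _ _
  att_comm := by rintro ((a | b) | c) <;> rfl
  lab_comm := by rintro ((a | b) | c) <;> rfl
  s1_comm := rfl
  s2_comm := rfl

end serG

/-! ### Parallel composition -/

namespace parG

/-- The inclusion of the left factor's vertices in a parallel composition. -/
def inl (G H : G2 L) (x : G.V) : (parG G H).V :=
  Quot.mk _ (Sum.inl x)

/-- The inclusion of the right factor's vertices in a parallel composition. -/
def inr (G H : G2 L) (y : H.V) : (parG G H).V :=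
  Quot.mk _ (Sum.inr y)

theorem inl_s1 (G H : G2 L) : inl G H G.s1 = inr G H H.s1 :=
  Quot.sound (.inl ⟨rfl, rfl⟩)

theorem inl_s2 (G H : G2 L) : inl G H G.s2 = inr G H H.s2 :=
  Quot.sound (.inr ⟨rfl, rfl⟩)

@[elab_as_elim]
theorem cases {motive : (parG G H).V → Prop} (inl : ∀ x, motive (inl G H x))
    (inr : ∀ y, motive (inr G H y)) (v : (parG G H).V) : motive v :=
  Quot.ind (fun | .inl x => inl x | .inr y => inr y) v

/-- The map out of a parallel composition given by compatible maps on its factors. -/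
def lift {α : Type*} (f : G.V → α) (g : H.V → α) (h1 : f G.s1 = g H.s1) (h2 : f G.s2 = g H.s2) :
    (parG G H).V → α :=
  Quot.lift (Sum.elim f g) (by rintro _ _ (⟨rfl, rfl⟩ | ⟨rfl, rfl⟩) <;> assumption)

open Classical in
/-- A retraction onto the left factor, which sends the right factor to the two sources (its inner
vertices to the 1-source, by an arbitrary choice). -/
noncomputable def retractLeft (G : G2 L) (hH : H.s1 ≠ H.s2) : (parG G H).V → G.V :=
  lift id (fun y => if y = H.s2 then G.s2 else G.s1) (if_neg hH).symm (if_pos rfl).symm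

open Classical in
/-- A retraction onto the right factor, which sends the left factor to the two sources (its inner
vertices to the 1-source, by an arbitrary choice). -/
noncomputable def retractRight (H : G2 L) (hG : G.s1 ≠ G.s2) : (parG G H).V → H.V :=
  lift (fun x => if x = G.s2 then H.s2 else H.s1) id (if_neg hG) (if_pos rfl)

/-- The left factor of a parallel composition as a subgraph. -/
def embLeft (G : G2 L) (hH : H.s1 ≠ H.s2) : GEmb G (parG G H) where
  vMap := inl G H
  eMap := Sum.inl
  vMap_injective _ _ h := congrArg (retractLeft G hH) h
  eMap_injective := Sum.inl_injective
  att_comm _ := rfl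
  lab_comm _ := rfl

/-- The right factor of a parallel composition as a subgraph. -/
def embRight (H : G2 L) (hG : G.s1 ≠ G.s2) : GEmb H (parG G H) where
  vMap := inr G H
  eMap := Sum.inr
  vMap_injective _ _ h := congrArg (retractRight H hG) h
  eMap_injective := Sum.inr_injective
  att_comm _ := rfl
  lab_comm _ := rfl

theorem inl_eq_source_of_inl_eq_inr (hH : H.s1 ≠ H.s2) {x : G.V} {y : H.V}
    (h : inl G H x = inr G H y) : inl G H x = (parG G H).s1 ∨ inl G H x = (parG G H).s2 := by
  classical
  have hx : x = if y = H.s2 then G.s2 else G.s1 := congrArg (retractLeft G hH) h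
  split_ifs at hx with hy
  · exact .inr (congrArg (inl G H) hx)
  · exact .inl (congrArg (inl G H) hx)

theorem isTwoTerminal (hG : G.IsTwoTerminal) (hH : H.IsTwoTerminal) :
    (parG G H).IsTwoTerminal where
  s1_ne_s2 h := hG.s1_ne_s2 ((embLeft G hH.s1_ne_s2).vMap_injective h)
  reach_from_s1 v := by
    cases v using parG.cases with
    | inl x => exact (embLeft G hH.s1_ne_s2).reach (hG.reach_from_s1 x)
    | inr y =>
      change (parG G H).Reach (inl G H G.s1) _
      rw [inl_s1]
      exact (embRight H hG.s1_ne_s2).reach (hH.reach_from_s1 y)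
  reach_to_s2 v := by
    cases v using parG.cases with
    | inl x => exact (embLeft G hH.s1_ne_s2).reach (hG.reach_to_s2 x)
    | inr y =>
      change (parG G H).Reach _ (inl G H G.s2)
      rw [inl_s2]
      exact (embRight H hG.s1_ne_s2).reach (hH.reach_to_s2 y)
  head_ne_s1 := by
    rintro (e | e) h
    · exact hG.head_ne_s1 e ((embLeft G hH.s1_ne_s2).vMap_injective h)
    · exact hH.head_ne_s1 e ((embRight H hG.s1_ne_s2).vMap_injective (h.trans (inl_s1 G H)))
  tail_ne_s2 := by
    rintro (e | e) h
    · exact hG.tail_ne_s2 e ((embLeft G hH.s1_ne_s2).vMap_injective h)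
    · exact hH.tail_ne_s2 e ((embRight H hG.s1_ne_s2).vMap_injective (h.trans (inl_s2 G H)))

/-- Parallel composition respects isomorphism. -/
def congr {A A' B B' : G2 L} (f : GIso A A') (g : GIso B B') :
    GIso (parG A B) (parG A' B') where
  vEquiv := Quot.congr (Equiv.sumCongr f.vEquiv g.vEquiv) (by
    rintro (a | a) (b | b) <;>
      simp [parRel, ← f.s1_comm, ← f.s2_comm, ← g.s1_comm, ← g.s2_comm])
  eEquiv := Equiv.sumCongr f.eEquiv g.eEquiv
  att_comm
    | .inl e => congrArg (Prod.map (inl A' B') (inl A' B')) (f.att_comm e)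
    | .inr e => congrArg (Prod.map (inr A' B') (inr A' B')) (g.att_comm e)
  lab_comm
    | .inl e => f.lab_comm e
    | .inr e => g.lab_comm e
  s1_comm := congrArg (inl A' B') f.s1_comm
  s2_comm := congrArg (inl A' B') f.s2_comm

/-- Parallel composition is associative up to isomorphism. -/
def assoc (A B C : G2 L) : GIso (parG (parG A B) C) (parG A (parG B C)) where
  vEquiv :=
    { toFun := lift
        (lift (inl A (parG B C)) (inr A (parG B C) ∘ inl B C) (inl_s1 A (parG B C))
          (inl_s2 A (parG B C)))
        (inr A (parG B C) ∘ inr B C)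
        ((inl_s1 A (parG B C)).trans (congrArg (inr A (parG B C)) (inl_s1 B C)))
        ((inl_s2 A (parG B C)).trans (congrArg (inr A (parG B C)) (inl_s2 B C)))
      invFun := lift (inl (parG A B) C ∘ inl A B)
        (lift (inl (parG A B) C ∘ inr A B) (inr (parG A B) C)
          ((congrArg (inl (parG A B) C) (inl_s1 A B)).symm.trans (inl_s1 (parG A B) C))
          ((congrArg (inl (parG A B) C) (inl_s2 A B)).symm.trans (inl_s2 (parG A B) C)))
        (congrArg (inl (parG A B) C) (inl_s1 A B))
        (congrArg (inl (parG A B) C) (inl_s2 A B))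
      left_inv := by rintro ⟨⟨⟨a | b⟩⟩ | c⟩ <;> rfl
      right_inv := by rintro ⟨a | ⟨⟨b | c⟩⟩⟩ <;> rfl }
  eEquiv := Equiv.sumAssoc _ _ _
  att_comm := by rintro ((a | b) | c) <;> rfl
  lab_comm := by rintro ((a | b) | c) <;> rfl
  s1_comm := rfl
  s2_comm := rfl

end parG

theorem IsSP.isTwoTerminal (h : IsSP G) : G.IsTwoTerminal := by
  induction h with
  | edge b => exact isTwoTerminal_edgeG b
  | par _ _ hG hH => exact parG.isTwoTerminal hG hH
  | ser _ _ hG hH => exact serG.isTwoTerminal hG hH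
  | iso _ f hG => exact hG.of_iso f

/-! ### Iterated compositions -/

/-- `op` is a semigroup operation on graphs up to isomorphism. -/
structure IsIsoSemigroup (op : G2 L → G2 L → G2 L) : Prop where
  congr : ∀ {A A' B B' : G2 L}, A ≅ᵍ A' → B ≅ᵍ B' → op A B ≅ᵍ op A' B'
  assoc : ∀ A B C : G2 L, op (op A B) C ≅ᵍ op A (op B C)

theorem isIsoSemigroup_serG : IsIsoSemigroup (serG (L := L)) where
  congr := fun ⟨f⟩ ⟨g⟩ => ⟨serG.congr f g⟩
  assoc A B C := ⟨serG.assoc A B C⟩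

theorem isIsoSemigroup_parG : IsIsoSemigroup (parG (L := L)) where
  congr := fun ⟨f⟩ ⟨g⟩ => ⟨parG.congr f g⟩
  assoc A B C := ⟨parG.assoc A B C⟩

theorem serFold_eq_foldl (g : G2 L) (l : List (G2 L)) : serFold g l = l.foldl serG g := by
  induction l generalizing g with
  | nil => rfl
  | cons _ _ ih => exact ih _

theorem parFold_eq_foldl (g : G2 L) (l : List (G2 L)) : parFold g l = l.foldl parG g := by
  induction l generalizing g with
  | nil => rfl
  | cons _ _ ih => exact ih _

/-- `G` is an iterated `op`-composition of a nonempty sequence of graphs satisfying `p`. -/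
def G2.DecomposesInto (G : G2 L) (op : G2 L → G2 L → G2 L) (p : G2 L → Prop) : Prop :=
  ∃ g l, (∀ H ∈ g :: l, p H) ∧ G ≅ᵍ List.foldl op g l

section Decomposition

variable {op : G2 L → G2 L → G2 L} {p : G2 L → Prop}

theorem IsIsoSemigroup.foldl_cons (hop : IsIsoSemigroup op) (g h : G2 L) (t : List (G2 L)) :
    (h :: t).foldl op g ≅ᵍ op g (t.foldl op h) := by
  induction t generalizing g h with
  | nil => exact .refl _
  | cons k t ih =>
    exact (ih (op g h) k).trans <| (hop.assoc g h _).trans <| hop.congr (.refl g) (ih h k).symm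

theorem IsIsoSemigroup.foldl_append (hop : IsIsoSemigroup op) (g h : G2 L) (s t : List (G2 L)) :
    (s ++ h :: t).foldl op g ≅ᵍ op (s.foldl op g) (t.foldl op h) := by
  rw [List.foldl_append]
  exact hop.foldl_cons _ h t

theorem G2.DecomposesInto.of_component (hG : p G) : G.DecomposesInto op p :=
  ⟨G, [], by simpa using hG, .refl G⟩

theorem G2.DecomposesInto.of_isomorphic (hG : G.DecomposesInto op p) (h : G ≅ᵍ H) :
    H.DecomposesInto op p :=
  have ⟨g, l, hl, hgl⟩ := hG
  ⟨g, l, hl, h.symm.trans hgl⟩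

theorem G2.DecomposesInto.comp (hop : IsIsoSemigroup op) (hG : G.DecomposesInto op p)
    (hH : H.DecomposesInto op p) : (op G H).DecomposesInto op p := by
  obtain ⟨g, s, hs, hG⟩ := hG
  obtain ⟨h, t, ht, hH⟩ := hH
  refine ⟨g, s ++ h :: t, ?_, (hop.congr hG hH).trans (hop.foldl_append g h s t).symm⟩
  rw [← List.cons_append]
  exact List.forall_mem_append.2 ⟨hs, ht⟩

end Decomposition

theorem IsSP.foldl_serG {g : G2 L} {l : List (G2 L)} (h : ∀ H ∈ g :: l, IsSP H) :
    IsSP (l.foldl serG g) :=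
  have ⟨hg, hl⟩ := List.forall_mem_cons.1 h
  List.foldlRecOn l serG hg fun _ hA H hH => hA.ser (hl H hH)

theorem isTwoTerminal_foldl_parG {g : G2 L} {l : List (G2 L)}
    (h : ∀ H ∈ g :: l, H.IsTwoTerminal) : (l.foldl parG g).IsTwoTerminal :=
  have ⟨hg, hl⟩ := List.forall_mem_cons.1 h
  List.foldlRecOn l parG hg fun _ hA H hH => parG.isTwoTerminal hA (hl H hH)

/-! ### Linked edges -/

namespace G2

/-- `v` is an endpoint of `e`. -/
def Incident (G : G2 L) (e : G.E) (v : G.V) : Prop :=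
  (G.att e).1 = v ∨ (G.att e).2 = v

/-- `e` and `f` share a vertex that is not a source. -/
def InnerAdj (G : G2 L) (e f : G.E) : Prop :=
  ∃ v, v ≠ G.s1 ∧ v ≠ G.s2 ∧ G.Incident e v ∧ G.Incident f v

/-- The equivalence relation on edges generated by sharing an inner vertex. -/
def linked (G : G2 L) : Setoid G.E :=
  Relation.EqvGen.setoid G.InnerAdj

/-- All edges of `G` are linked through inner vertices. -/
def IsInnerConnected (G : G2 L) : Prop :=
  ∀ e f, G.linked e f

theorem InnerAdj.linked {e f : G.E} (h : G.InnerAdj e f) : G.linked e f :=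
  .rel _ _ h

theorem linked_le {s : Setoid G.E} (h : ∀ e f, G.InnerAdj e f → s e f) : G.linked ≤ s :=
  Setoid.eqvGen_le h

/-- A cut vertex of a two-terminal graph: an inner vertex through which all directed paths between
the sources run, expressed by comparing it with every edge in the reachability order. -/
structure IsCut (G : G2 L) (v : G.V) : Prop where
  ne_s1 : v ≠ G.s1
  ne_s2 : v ≠ G.s2
  splits : ∀ e, G.Reach (G.att e).2 v ∨ G.Reach v (G.att e).1

theorem IsTwoTerminal.innerAdj_of_head_eq_tail (hG : G.IsTwoTerminal) {e f : G.E}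
    (h : (G.att e).2 = (G.att f).1) : G.InnerAdj e f :=
  ⟨_, hG.head_ne_s1 e, h ▸ hG.tail_ne_s2 f, .inr rfl, .inl h.symm⟩

theorem IsTwoTerminal.linked_of_reach (hG : G.IsTwoTerminal) {e f : G.E}
    (h : G.Reach (G.att e).2 (G.att f).1) : G.linked e f := by
  generalize hv : (G.att e).2 = v at h
  induction h using Relation.ReflTransGen.head_induction_on generalizing e with
  | refl => exact (hG.innerAdj_of_head_eq_tail hv).linked
  | head step _ ih =>
    obtain ⟨k, hk, hk'⟩ := step
    exact G.linked.trans (hG.innerAdj_of_head_eq_tail (hv.trans hk.symm)).linked (ih hk')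

theorem IsTwoTerminal.isInnerConnected_of_isCut (hG : G.IsTwoTerminal) {v : G.V}
    (hv : G.IsCut v) : G.IsInnerConnected := by
  obtain ⟨i, rfl⟩ := (hG.eq_s1_or_exists_head_eq v).resolve_left hv.ne_s1
  obtain ⟨o, ho⟩ := (hG.eq_s2_or_exists_tail_eq _).resolve_left hv.ne_s2
  have linked_io : G.linked i o := hG.linked_of_reach (ho ▸ .refl)
  have linked_i (e : G.E) : G.linked e i := by
    obtain h | h := hv.splits e
    · exact G.linked.trans (hG.linked_of_reach (ho ▸ h)) (G.linked.symm linked_io)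
    · exact G.linked.symm (hG.linked_of_reach h)
  exact fun e f => G.linked.trans (linked_i e) (G.linked.symm (linked_i f))

theorem IsCut.map_iso {v : G.V} (hv : G.IsCut v) (f : GIso G H) : H.IsCut (f.vEquiv v) where
  ne_s1 := by simpa [← f.s1_comm] using hv.ne_s1
  ne_s2 := by simpa [← f.s2_comm] using hv.ne_s2
  splits := f.eEquiv.forall_congr_right.1 fun e => by
    simpa only [f.att_comm, f.reach_iff] using hv.splits e

end G2

namespace GEmb

theorem incident_eMap_iff (f : GEmb A G) {e : A.E} {v : G.V} :
    G.Incident (f.eMap e) v ↔ ∃ x, A.Incident e x ∧ f.vMap x = v := by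
  simp [G2.Incident, f.att_comm, or_and_right, exists_or]

theorem innerAdj_eMap_iff (f : GEmb A G) (h1 : f.vMap A.s1 = G.s1) (h2 : f.vMap A.s2 = G.s2)
    {e e' : A.E} : G.InnerAdj (f.eMap e) (f.eMap e') ↔ A.InnerAdj e e' := by
  simp only [G2.InnerAdj, f.incident_eMap_iff, ← h1, ← h2]
  constructor
  · rintro ⟨_, hx1, hx2, ⟨x, hx, rfl⟩, ⟨y, hy, hxy⟩⟩
    cases f.vMap_injective hxy
    exact ⟨x, mt (congrArg _) hx1, mt (congrArg _) hx2, hx, hy⟩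
  · rintro ⟨x, hx1, hx2, hx, hx'⟩
    exact ⟨_, f.vMap_injective.ne hx1, f.vMap_injective.ne hx2, ⟨x, hx, rfl⟩, ⟨x, hx', rfl⟩⟩

theorem linked_eMap (f : GEmb A G) (h1 : f.vMap A.s1 = G.s1) (h2 : f.vMap A.s2 = G.s2)
    {e e' : A.E} (h : A.linked e e') : G.linked (f.eMap e) (f.eMap e') :=
  G2.linked_le (s := G.linked.comap f.eMap)
    (fun _ _ h => ((f.innerAdj_eMap_iff h1 h2).2 h).linked) h

end GEmb

theorem parG.innerAdj_liftRel (hG : G.s1 ≠ G.s2) (hH : H.s1 ≠ H.s2) {e f : (parG G H).E}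
    (h : (parG G H).InnerAdj e f) : Sum.LiftRel G.InnerAdj H.InnerAdj e f := by
  have not_mixed {e : G.E} {f : H.E} {v : (parG G H).V} (hv1 : v ≠ (parG G H).s1)
      (hv2 : v ≠ (parG G H).s2) (he : (parG G H).Incident (Sum.inl e) v)
      (hf : (parG G H).Incident (Sum.inr f) v) : False := by
    obtain ⟨x, -, rfl⟩ := (embLeft G hH).incident_eMap_iff.1 he
    obtain ⟨y, -, hy⟩ := (embRight H hG).incident_eMap_iff.1 hf
    exact (inl_eq_source_of_inl_eq_inr hH hy.symm).elim hv1 hv2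
  obtain e | e := e <;> obtain f | f := f
  · exact .inl (((embLeft G hH).innerAdj_eMap_iff rfl rfl).1 h)
  · obtain ⟨v, hv1, hv2, he, hf⟩ := h
    exact (not_mixed hv1 hv2 he hf).elim
  · obtain ⟨v, hv1, hv2, he, hf⟩ := h
    exact (not_mixed hv1 hv2 hf he).elim
  · exact .inr (((embRight H hG).innerAdj_eMap_iff (inl_s1 G H).symm (inl_s2 G H).symm).1 h)

theorem parG.not_isInnerConnected (hG : G.IsTwoTerminal) (hH : H.IsTwoTerminal) :
    ¬ (parG G H).IsInnerConnected := by
  obtain ⟨e⟩ := hG.nonempty_edges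
  obtain ⟨f⟩ := hH.nonempty_edges
  intro h
  have same_side : (parG G H).linked ≤ Setoid.ker Sum.isLeft := G2.linked_le fun e f hef => by
    obtain _ | _ := innerAdj_liftRel hG.s1_ne_s2 hH.s1_ne_s2 hef <;> rfl
  exact Bool.noConfusion (same_side (h (Sum.inl e) (Sum.inr f)))

/-! ### P-graphs and cut vertices -/

theorem serG.isCut_joint (hG : G.IsTwoTerminal) (hH : H.IsTwoTerminal) :
    (serG G H).IsCut (inl G H G.s2) where
  ne_s1 h := hG.s1_ne_s2 (congrArg (retractLeft G H) h).symm
  ne_s2 h := hH.s1_ne_s2 (congrArg (retractRight G H) h)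
  splits
    | .inl _ => .inl (reach_inl_joint hG _)
    | .inr _ => .inr (reach_joint_inr hH _)

theorem serG.isCut_of_isCut_inl {x : G.V} (hx : x ≠ G.s2) (h : (serG G H).IsCut (inl G H x)) :
    G.IsCut x where
  ne_s1 h1 := h.ne_s1 (congrArg (inl G H) h1)
  ne_s2 := hx
  splits e := (h.splits (Sum.inl e)).imp reach_retractLeft reach_retractLeft

theorem not_isCut_edgeG (b : L) : ∀ v, ¬ (edgeG b).IsCut v
  | false, hv => hv.ne_s1 rfl
  | true, hv => hv.ne_s2 rfl

theorem not_isCut_parG (hG : G.IsTwoTerminal) (hH : H.IsTwoTerminal) (v : (parG G H).V) :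
    ¬ (parG G H).IsCut v := fun hv =>
  parG.not_isInnerConnected hG hH ((parG.isTwoTerminal hG hH).isInnerConnected_of_isCut hv)

theorem IsSP.forall_not_isCut_or_exists_serG (h : IsSP G) :
    (∀ v, ¬ G.IsCut v) ∨ ∃ A B, IsSP A ∧ IsSP B ∧ G ≅ᵍ serG A B := by
  induction h with
  | edge b => exact .inl (not_isCut_edgeG b)
  | par hG hH _ _ => exact .inl (not_isCut_parG hG.isTwoTerminal hH.isTwoTerminal)
  | ser hG hH _ _ => exact .inr ⟨_, _, hG, hH, .refl _⟩
  | iso _ f ih =>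
    obtain no_cut | ⟨A, B, hA, hB, hAB⟩ := ih
    · exact .inl fun v hv => no_cut _ (hv.map_iso f.symm)
    · exact .inr ⟨A, B, hA, hB, .trans ⟨f.symm⟩ hAB⟩

theorem IsSP.pGraph_iff_forall_not_isCut (h : IsSP G) : PGraph G ↔ ∀ v, ¬ G.IsCut v := by
  constructor
  · intro hG
    refine h.forall_not_isCut_or_exists_serG.resolve_right ?_
    rintro ⟨A, B, hA, hB, hAB⟩
    exact hG.2 A B hA hB hAB
  · intro no_cut
    refine ⟨h, ?_⟩
    rintro A B hA hB ⟨f⟩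
    exact no_cut _ ((serG.isCut_joint hA.isTwoTerminal hB.isTwoTerminal).map_iso f.symm)

theorem PGraph.not_isCut (h : PGraph G) : ∀ v, ¬ G.IsCut v :=
  h.1.pGraph_iff_forall_not_isCut.1 h

theorem PGraph.of_isomorphic (h : PGraph G) : G ≅ᵍ H → PGraph H
  | ⟨f⟩ => ⟨h.1.iso f, fun A B hA hB ⟨g⟩ => h.2 A B hA hB ⟨f.trans g⟩⟩

/-! ### Serial decompositions -/

theorem IsSP.decomposesInto_serG (h : IsSP G) : G.DecomposesInto serG PGraph := by
  induction h with
  | edge b =>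
    exact .of_component ((IsSP.edge b).pGraph_iff_forall_not_isCut.2 (not_isCut_edgeG b))
  | par hG hH _ _ =>
    exact .of_component ((hG.par hH).pGraph_iff_forall_not_isCut.2
      (not_isCut_parG hG.isTwoTerminal hH.isTwoTerminal))
  | ser _ _ hG hH => exact hG.comp isIsoSemigroup_serG hH
  | iso _ f hG => exact hG.of_isomorphic ⟨f⟩

namespace serG

theorem reach_joint_of_isCut (hA : A.IsTwoTerminal) (hP : ∀ v, ¬ P.IsCut v) {v : (serG P A).V}
    (hv : (serG P A).IsCut v) : (serG P A).Reach (inl P A P.s2) v := by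
  cases v using serG.cases with
  | inl x =>
    obtain rfl | hx := eq_or_ne x P.s2
    · exact .refl
    · exact absurd (isCut_of_isCut_inl hx hv) (hP x)
  | inr y => exact reach_joint_inr hA y

theorem iso_joint (hP : P.IsTwoTerminal) (hA : A.IsTwoTerminal) (hQ : Q.IsTwoTerminal)
    (hB : B.IsTwoTerminal) (hP' : ∀ v, ¬ P.IsCut v) (hQ' : ∀ v, ¬ Q.IsCut v)
    (f : GIso (serG P A) (serG Q B)) : f.vEquiv (inl P A P.s2) = inl Q B Q.s2 := by
  have joint_le : (serG Q B).Reach (inl Q B Q.s2) (f.vEquiv (inl P A P.s2)) :=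
    reach_joint_of_isCut hB hQ' ((isCut_joint hP hA).map_iso f)
  have joint_ge : (serG P A).Reach (inl P A P.s2) (f.symm.vEquiv (inl Q B Q.s2)) :=
    reach_joint_of_isCut hA hP' ((isCut_joint hQ hB).map_iso f.symm)
  rw [← f.reach_iff, GIso.symm, Equiv.apply_symm_apply] at joint_ge
  exact eq_joint_of_reach hQ hB joint_le joint_ge

theorem cancel (hP : P.IsTwoTerminal) (hA : A.IsTwoTerminal) (hQ : Q.IsTwoTerminal)
    (hB : B.IsTwoTerminal) (hP' : ∀ v, ¬ P.IsCut v) (hQ' : ∀ v, ¬ Q.IsCut v) :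
    serG P A ≅ᵍ serG Q B → P ≅ᵍ Q ∧ A ≅ᵍ B := by
  rintro ⟨f⟩
  have joint_eq := iso_joint hP hA hQ hB hP' hQ' f
  have isLeft_eq (e : (serG P A).E) : (f.eEquiv e).isLeft = e.isLeft := by
    rw [Bool.eq_iff_iff, ← reach_head_joint_iff hQ hB, ← reach_head_joint_iff hP hA, ← joint_eq,
      f.att_comm, f.reach_iff]
  obtain ⟨edges_left, edges_right⟩ := range_comp_inl_inr_of_isLeft_eq f.eEquiv isLeft_eq
  constructor
  · exact (f.toGEmb.comp (embLeft P A)).isomorphic_of_range_eq (embLeft Q B) hP hQ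
      f.s1_comm joint_eq edges_left
  · refine (f.toGEmb.comp (embRight P A)).isomorphic_of_range_eq (embRight Q B) hA hB ?_
      f.s2_comm edges_right
    exact (congrArg f.vEquiv (inl_s2 P A)).symm.trans (joint_eq.trans (inl_s2 Q B))

end serG

theorem forall₂_isomorphic_of_foldl_serG {g g' : G2 L} {l l' : List (G2 L)}
    (h : ∀ H ∈ g :: l, PGraph H) (h' : ∀ H ∈ g' :: l', PGraph H)
    (hll' : l.foldl serG g ≅ᵍ l'.foldl serG g') :
    List.Forall₂ G2.Isomorphic (g :: l) (g' :: l') := by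
  have ⟨hg, hl⟩ := List.forall_mem_cons.1 h
  have ⟨hg', hl'⟩ := List.forall_mem_cons.1 h'
  have serG_of_cons (g k : G2 L) (t : List (G2 L)) := isIsoSemigroup_serG.foldl_cons g k t
  have isSP_tail {k : G2 L} {t : List (G2 L)} (ht : ∀ H ∈ k :: t, PGraph H) :
      IsSP (t.foldl serG k) := .foldl_serG fun H hH => (ht H hH).1
  induction l generalizing g g' l' with
  | nil =>
    cases l' with
    | nil => exact .cons hll' .nil
    | cons k' t' =>
      exact absurd (hll'.trans (serG_of_cons g' k' t')) (hg.2 _ _ hg'.1 (isSP_tail hl'))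
  | cons k t ih =>
    cases l' with
    | nil =>
      exact absurd (hll'.symm.trans (serG_of_cons g k t)) (hg'.2 _ _ hg.1 (isSP_tail hl))
    | cons k' t' =>
      obtain ⟨head, tail⟩ := serG.cancel hg.1.isTwoTerminal (isSP_tail hl).isTwoTerminal
        hg'.1.isTwoTerminal (isSP_tail hl').isTwoTerminal hg.not_isCut hg'.not_isCut
        ((serG_of_cons g k t).symm.trans (hll'.trans (serG_of_cons g' k' t')))
      obtain ⟨hk, ht⟩ := List.forall_mem_cons.1 hl
      obtain ⟨hk', ht'⟩ := List.forall_mem_cons.1 hl'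
      exact .cons head (ih hl hl' tail hk ht hk' ht')

/-! ### Parallel decompositions -/

/-- The components of parallel decompositions: single edges and S-graphs. -/
def IsParComponent (G : G2 L) : Prop :=
  IsSingleEdge G ∨ (IsSP G ∧ ¬ PGraph G)

theorem IsSingleEdge.of_isomorphic : IsSingleEdge G → G ≅ᵍ H → IsSingleEdge H
  | ⟨b, hb⟩, h => ⟨b, h.symm.trans hb⟩

namespace IsParComponent

theorem isSP : IsParComponent G → IsSP G
  | .inl ⟨b, ⟨f⟩⟩ => (IsSP.edge b).iso f.symm
  | .inr h => h.1

theorem isInnerConnected (hG : IsParComponent G) : G.IsInnerConnected := by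
  obtain ⟨b, ⟨f⟩⟩ | ⟨hSP, hS⟩ := hG
  · have : Subsingleton G.E := f.eEquiv.subsingleton (β := Unit)
    exact fun e e' => Subsingleton.elim e e' ▸ G.linked.refl e
  · have ⟨v, hv⟩ := not_forall_not.1 (mt hSP.pGraph_iff_forall_not_isCut.2 hS)
    exact hSP.isTwoTerminal.isInnerConnected_of_isCut hv

end IsParComponent

theorem IsSP.decomposesInto_parG (h : IsSP G) : G.DecomposesInto parG IsParComponent := by
  induction h with
  | edge b => exact .of_component (.inl ⟨b, G2.Isomorphic.refl _⟩)
  | par _ _ hG hH => exact hG.comp isIsoSemigroup_parG hH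
  | ser hG hH _ _ =>
    exact .of_component (.inr ⟨hG.ser hH, fun h => h.2 _ _ hG hH (G2.Isomorphic.refl _)⟩)
  | iso _ f hG => exact hG.of_isomorphic ⟨f⟩

/-- A splitting of `G` along its sources into edge-disjoint subgraphs `comp i`, which together cover
all edges and share no inner vertex. The index of the subgraph containing an edge is its color. -/
structure ParSplitting (G : G2 L) {ι : Type} (comp : ι → G2 L) where
  emb : ∀ i, GEmb (comp i) G
  map_s1 : ∀ i, (emb i).vMap (comp i).s1 = G.s1
  map_s2 : ∀ i, (emb i).vMap (comp i).s2 = G.s2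
  color : G.E → ι
  color_eMap : ∀ i a, color ((emb i).eMap a) = i
  exists_eMap_eq : ∀ e, ∃ a, (emb (color e)).eMap a = e
  color_eq_of_innerAdj : ∀ {e f}, G.InnerAdj e f → color e = color f

namespace ParSplitting

variable {ι ι' : Type} {comp : ι → G2 L} {comp' : ι' → G2 L}

/-- Transport of a splitting along an isomorphism. -/
def ofIso (D : ParSplitting G comp) (f : GIso G H) : ParSplitting H comp where
  emb i := f.toGEmb.comp (D.emb i)
  map_s1 i := (congrArg f.vEquiv (D.map_s1 i)).trans f.s1_comm
  map_s2 i := (congrArg f.vEquiv (D.map_s2 i)).trans f.s2_comm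
  color := D.color ∘ f.eEquiv.symm
  color_eMap i a := (congrArg D.color (f.eEquiv.symm_apply_apply _)).trans (D.color_eMap i a)
  exists_eMap_eq e :=
    have ⟨a, ha⟩ := D.exists_eMap_eq (f.eEquiv.symm e)
    ⟨a, f.eEquiv.eq_symm_apply.1 ha⟩
  color_eq_of_innerAdj h := D.color_eq_of_innerAdj
    ((f.symm.toGEmb.innerAdj_eMap_iff f.symm.s1_comm f.symm.s2_comm).2 h)

/-- The splitting of a graph into itself. -/
def single (G : G2 L) : ParSplitting G [G].get where
  emb := Fin.cases (GIso.refl G).toGEmb (·.elim0)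
  map_s1 := Fin.cases rfl (·.elim0)
  map_s2 := Fin.cases rfl (·.elim0)
  color _ := 0
  color_eMap := Fin.cases (fun _ => rfl) (·.elim0)
  exists_eMap_eq e := ⟨e, rfl⟩
  color_eq_of_innerAdj _ := rfl

/-- Adding a component on the left. -/
def cons {l : List (G2 L)} (hG : G.s1 ≠ G.s2) (hH : H.s1 ≠ H.s2) (D : ParSplitting H l.get) :
    ParSplitting (parG G H) (G :: l).get where
  emb := Fin.cases (parG.embLeft G hH) fun i => (parG.embRight H hG).comp (D.emb i)
  map_s1 := Fin.cases rfl fun i =>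
    (congrArg (parG.inr G H) (D.map_s1 i)).trans (parG.inl_s1 G H).symm
  map_s2 := Fin.cases rfl fun i =>
    (congrArg (parG.inr G H) (D.map_s2 i)).trans (parG.inl_s2 G H).symm
  color := Sum.elim (fun _ => 0) (Fin.succ ∘ D.color)
  color_eMap := Fin.cases (fun _ => rfl) fun i a => congrArg Fin.succ (D.color_eMap i a)
  exists_eMap_eq := by
    rintro (e | e)
    · exact ⟨e, rfl⟩
    · obtain ⟨a, ha⟩ := D.exists_eMap_eq e
      exact ⟨a, congrArg Sum.inr ha⟩
  color_eq_of_innerAdj h := by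
    obtain _ | hef := parG.innerAdj_liftRel hG hH h
    · rfl
    · exact congrArg Fin.succ (D.color_eq_of_innerAdj hef)

theorem nonempty_foldl {g : G2 L} {l : List (G2 L)} (h : ∀ H ∈ g :: l, H.IsTwoTerminal) :
    Nonempty (ParSplitting (l.foldl parG g) (g :: l).get) := by
  induction l generalizing g with
  | nil => exact ⟨single g⟩
  | cons k t ih =>
    obtain ⟨hg, ht⟩ := List.forall_mem_cons.1 h
    obtain ⟨D⟩ := ih ht
    obtain ⟨f⟩ := isIsoSemigroup_parG.foldl_cons g k t
    exact ⟨(D.cons hg.s1_ne_s2 (isTwoTerminal_foldl_parG ht).s1_ne_s2).ofIso f.symm⟩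

theorem range_eMap (D : ParSplitting G comp) (i : ι) :
    Set.range (D.emb i).eMap = D.color ⁻¹' {i} := by
  ext e
  constructor
  · rintro ⟨a, rfl⟩
    exact D.color_eMap i a
  · rintro rfl
    exact D.exists_eMap_eq e

theorem ker_color (D : ParSplitting G comp) (h : ∀ i, (comp i).IsInnerConnected) :
    Setoid.ker D.color = G.linked := by
  refine le_antisymm (fun e e' hee' => ?_) (G2.linked_le fun _ _ => D.color_eq_of_innerAdj)
  obtain ⟨a, ha⟩ := D.exists_eMap_eq e
  obtain ⟨b, hb⟩ := (D.range_eMap (D.color e)).superset (Eq.symm hee')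
  rw [← ha, ← hb]
  exact (D.emb _).linked_eMap (D.map_s1 _) (D.map_s2 _) (h _ a b)

theorem color_surjective (D : ParSplitting G comp) (h : ∀ i, Nonempty (comp i).E) :
    D.color.Surjective := fun i =>
  have ⟨a⟩ := h i
  ⟨(D.emb i).eMap a, D.color_eMap i a⟩

theorem exists_equiv (D : ParSplitting G comp) (D' : ParSplitting G comp')
    (h : ∀ i, (comp i).IsTwoTerminal) (h' : ∀ i, (comp' i).IsTwoTerminal)
    (hc : ∀ i, (comp i).IsInnerConnected) (hc' : ∀ i, (comp' i).IsInnerConnected) :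
    ∃ φ : ι ≃ ι', ∀ i, comp i ≅ᵍ comp' (φ i) := by
  obtain ⟨φ, hφ⟩ := exists_equiv_of_ker_eq (D.color_surjective fun i => (h i).nonempty_edges)
    (D'.color_surjective fun i => (h' i).nonempty_edges)
    ((D.ker_color hc).trans (D'.ker_color hc').symm)
  refine ⟨φ, fun i => (D.emb i).isomorphic_of_range_eq (D'.emb (φ i)) (h i) (h' _)
    ((D.map_s1 i).trans (D'.map_s1 _).symm) ((D.map_s2 i).trans (D'.map_s2 _).symm) ?_⟩
  ext e
  simp [D.range_eMap, D'.range_eMap, ← hφ]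

end ParSplitting

theorem exists_equiv_of_foldl_parG {g g' : G2 L} {l l' : List (G2 L)}
    (h : ∀ H ∈ g :: l, IsParComponent H) (h' : ∀ H ∈ g' :: l', IsParComponent H) :
    l.foldl parG g ≅ᵍ l'.foldl parG g' →
      ∃ φ : Fin (g :: l).length ≃ Fin (g' :: l').length,
        ∀ i, (g :: l).get i ≅ᵍ (g' :: l').get (φ i) := by
  rintro ⟨f⟩
  obtain ⟨D⟩ := ParSplitting.nonempty_foldl fun H hH => (h H hH).isSP.isTwoTerminal
  obtain ⟨D'⟩ := ParSplitting.nonempty_foldl fun H hH => (h' H hH).isSP.isTwoTerminal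
  exact (D.ofIso f).exists_equiv D' (fun i => (h _ (List.get_mem _ i)).isSP.isTwoTerminal)
    (fun i => (h' _ (List.get_mem _ i)).isSP.isTwoTerminal)
    (fun i => (h _ (List.get_mem _ i)).isInnerConnected)
    (fun i => (h' _ (List.get_mem _ i)).isInnerConnected)

/-- canonical decomposition of series-parallel graphs. Every
S-graph is a serial composition of a unique sequence of at least two P-graphs
(unique up to componentwise isomorphism), and every P-graph is either a single
edge or a parallel composition of a unique collection of at least two single
edges and S-graphs (unique up to a bijection matching isomorphic
components). -/
theorem sp_canonical_decomposition {L : Type} (G : G2 L) (hG : IsSP G) :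
    (¬ PGraph G →
      ∃ (g : G2 L) (l : List (G2 L)), l ≠ [] ∧ PGraph g ∧ (∀ H ∈ l, PGraph H) ∧
        Nonempty (GIso G (serFold g l)) ∧
        (∀ (g' : G2 L) (l' : List (G2 L)), l' ≠ [] → PGraph g' →
          (∀ H ∈ l', PGraph H) → Nonempty (GIso G (serFold g' l')) →
          Nonempty (GIso g g') ∧
          ∃ hlen : l.length = l'.length,
            ∀ i : Fin l.length, Nonempty (GIso (l.get i) (l'.get (Fin.cast hlen i))))) ∧
    (PGraph G → ¬ IsSingleEdge G →
      ∃ (g : G2 L) (l : List (G2 L)), l ≠ [] ∧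
        (IsSingleEdge g ∨ (IsSP g ∧ ¬ PGraph g)) ∧
        (∀ H ∈ l, IsSingleEdge H ∨ (IsSP H ∧ ¬ PGraph H)) ∧
        Nonempty (GIso G (parFold g l)) ∧
        (∀ (g' : G2 L) (l' : List (G2 L)), l' ≠ [] →
          (IsSingleEdge g' ∨ (IsSP g' ∧ ¬ PGraph g')) →
          (∀ H ∈ l', IsSingleEdge H ∨ (IsSP H ∧ ¬ PGraph H)) →
          Nonempty (GIso G (parFold g' l')) →
          ∃ e : Fin (g :: l).length ≃ Fin (g' :: l').length,
            ∀ i, Nonempty (GIso ((g :: l).get i) ((g' :: l').get (e i))))) := by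
  simp only [serFold_eq_foldl, parFold_eq_foldl]
  constructor
  · intro not_P
    obtain ⟨g, l, hgl, hG_eq⟩ := hG.decomposesInto_serG
    obtain ⟨hg, hl⟩ := List.forall_mem_cons.1 hgl
    refine ⟨g, l, ?_, hg, hl, hG_eq, fun g' l' _ hg' hl' hG_eq' => ?_⟩
    · rintro rfl
      exact not_P (hg.of_isomorphic hG_eq.symm)
    · obtain _ | ⟨head, tail⟩ := forall₂_isomorphic_of_foldl_serG hgl
        (List.forall_mem_cons.2 ⟨hg', hl'⟩) (hG_eq.symm.trans hG_eq')
      exact ⟨head, tail.length_eq, fun i => tail.get _ _⟩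
  · intro hP not_edge
    obtain ⟨g, l, hgl, hG_eq⟩ := hG.decomposesInto_parG
    obtain ⟨hg, hl⟩ := List.forall_mem_cons.1 hgl
    refine ⟨g, l, ?_, hg, hl, hG_eq, fun g' l' _ hg' hl' hG_eq' => ?_⟩
    · rintro rfl
      obtain hg | ⟨_, not_P⟩ := hg
      · exact not_edge (hg.of_isomorphic hG_eq.symm)
      · exact not_P (hP.of_isomorphic hG_eq)
    · exact exists_equiv_of_foldl_parG hgl (List.forall_mem_cons.2 ⟨hg', hl'⟩)
        (hG_eq.symm.trans hG_eq')
end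

section
/- Let G be a connected graph of tree-width at most 2, B a nontrivial block of G, and x any vertex of B. Then there exists a vertex y of B with an edge between x and y such that B with 1-source x and 2-source y is a ∘-atomic disoriented series-parallel graph. -/
/-- A graph with binary labeled edges. -/
structure BGraph (L : Type) where
  V : Type
  E : Type
  att : E → V × V
  lab : E → L

/-- Adjacency inside a subgraph `(VS, ES)` of `G`. -/
def adjIn {L : Type} (G : BGraph L) (VS : Set G.V) (ES : Set G.E)
    (u v : G.V) : Prop :=
  u ∈ VS ∧ v ∈ VS ∧ ∃ e ∈ ES, G.att e = (u, v) ∨ G.att e = (v, u)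

/-- Connectivity (existence of an undirected path) inside a subgraph. -/
def connIn {L : Type} (G : BGraph L) (VS : Set G.V) (ES : Set G.E)
    (u v : G.V) : Prop :=
  Relation.ReflTransGen (adjIn G VS ES) u v

/-- `(VS, ES)` is a subgraph: attachments of selected edges are selected. -/
def IsSub {L : Type} (G : BGraph L) (VS : Set G.V) (ES : Set G.E) : Prop :=
  ∀ e ∈ ES, (G.att e).1 ∈ VS ∧ (G.att e).2 ∈ VS

/-- `w` is a cutvertex of the subgraph `(VS, ES)`: two vertices distinct from
`w` are connected in the subgraph but disconnected after removing `w` and all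
its incident edges. -/
def CutvertexIn {L : Type} (G : BGraph L) (VS : Set G.V) (ES : Set G.E)
    (w : G.V) : Prop :=
  w ∈ VS ∧ ∃ u v : G.V, u ∈ VS ∧ v ∈ VS ∧ u ≠ w ∧ v ≠ w ∧
    connIn G VS ES u v ∧
    ¬ connIn G (VS \ {w}) (ES \ {e | (G.att e).1 = w ∨ (G.att e).2 = w}) u v

/-- The subgraph `(VS, ES)` is connected and nonempty. -/
def ConnSub {L : Type} (G : BGraph L) (VS : Set G.V) (ES : Set G.E) : Prop :=
  VS.Nonempty ∧ ∀ u ∈ VS, ∀ v ∈ VS, connIn G VS ES u v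

/-- A block of `G`: a maximal connected subgraph without a cutvertex. -/
def IsBlock {L : Type} (G : BGraph L) (VS : Set G.V) (ES : Set G.E) : Prop :=
  IsSub G VS ES ∧ ConnSub G VS ES ∧ (¬ ∃ w, CutvertexIn G VS ES w) ∧
    ∀ VS' ES', IsSub G VS' ES' → ConnSub G VS' ES' →
      (¬ ∃ w, CutvertexIn G VS' ES' w) → VS ⊆ VS' → ES ⊆ ES' →
      VS' = VS ∧ ES' = ES

/-- `Anc par m n`: `m` is an ancestor of `n` in the rooted tree given by the
parent map `par`. -/
def Anc {N : Type} (par : N → Option N) (m n : N) : Prop :=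
  Relation.ReflTransGen (fun a b => par a = some b) n m

/-- `G` has a tree decomposition of width at most 2: a rooted tree with bags of
at most 3 vertices covering all vertices and edges, with connected occurrence
sets. -/
def TWle2 {L : Type} (G : BGraph L) : Prop :=
  ∃ (N : Type) (par : N → Option N) (β : N → Set G.V),
    (∃ r, par r = none ∧ ∀ m, Anc par r m) ∧
    (∀ e : G.E, ∃ n, (G.att e).1 ∈ β n ∧ (G.att e).2 ∈ β n) ∧
    (∀ v : G.V, ∃ n, v ∈ β n) ∧
    (∀ (v : G.V) (n m k : N), v ∈ β n → v ∈ β m →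
      Anc par m n → Anc par k n → Anc par m k → v ∈ β k) ∧
    (∀ (v : G.V) (n₁ n₂ m : N), v ∈ β n₁ → v ∈ β n₂ →
      Anc par m n₁ → Anc par m n₂ →
      (∀ m', Anc par m' n₁ → Anc par m' n₂ → Anc par m' m) → v ∈ β m) ∧
    (∀ n, (β n).Finite ∧ (β n).ncard ≤ 3)

/-- The subgraph `(VS, ES)` of `G`, viewed as a graph of sort `{1,2}` with
1-source `x` and 2-source `y`. -/
def subG2 {L : Type} (G : BGraph L) (VS : Set G.V) (ES : Set G.E)
    (hcl : IsSub G VS ES) (x y : G.V) (hx : x ∈ VS) (hy : y ∈ VS) : G2 L where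
  V := VS
  E := ES
  att := fun e => (⟨(G.att e.1).1, (hcl e.1 e.2).1⟩, ⟨(G.att e.1).2, (hcl e.1 e.2).2⟩)
  lab := fun e => G.lab e.1
  s1 := ⟨x, hx⟩
  s2 := ⟨y, hy⟩

/-!
Fix an edge `xy` of the block and consider all ways of splitting the block into disoriented
series-parallel pieces that meet only at their ends, `x` and `y` never being interior to a piece and
the two ends of a piece always sharing a bag of the tree decomposition; the single edges form one.
A splitting with the fewest pieces has only one piece. Two pieces with the same ends could be merged
in parallel. If there are several pieces with distinct pairs of ends, some end differs from `x` and
`y`. Call two vertices adjacent when they share a bag: this graph is chordal, so by Dirac's lemma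
there is a simplicial vertex `v` among the ends other than `x` and `y`. All pieces at `v` then have
their ends in one bag of at most three vertices, so `v` has at most two neighbours; it has two, as a
single one would be a cutvertex. The two pieces at `v` could thus be merged in series.

The result is `∘`-atomic because the sources of a disoriented series-parallel graph are distinct, so
that no edge of a serial composition joins its sources, whereas `xy` does.
-/

section SimplicialVertices

variable {V N : Type*} {β : N → Set V}

/-- `w` is a simplicial vertex, relative to `A`, of the chordal graph in which two vertices are
adjacent when they share a bag. Instead of asking that the neighbours of `w` in `A` be pairwise
adjacent, we ask for a single bag containing `w` and all of them. -/
def IsSimplicialIn (β : N → Set V) (A : Set V) (w : V) : Prop :=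
  ∃ n, w ∈ β n ∧ ∀ u ∈ A, ∀ m, u ∈ β m → w ∈ β m → u ∈ β n

/-- Every nonempty finite set of vertices has a simplicial vertex: the property of the bags of a
tree decomposition on which elimination arguments rest. -/
def HasSimplicialVertices (β : N → Set V) : Prop :=
  ∀ A : Finset V, A.Nonempty → ∃ w ∈ A, IsSimplicialIn β A w

-- Dirac's lemma for chordal graphs.
theorem HasSimplicialVertices.exists_notMem (hβ : HasSimplicialVertices β) {K : Set V}
    (hK : ∃ n, K ⊆ β n) {A : Finset V} (hAK : ¬ (A : Set V) ⊆ K) :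
    ∃ v ∈ A, v ∉ K ∧ IsSimplicialIn β A v := by
  classical
  induction A using Finset.strongInduction generalizing K with
  | H A ih =>
    obtain ⟨v, hvA, hvK⟩ := Set.not_subset.1 hAK
    obtain ⟨w, hwA, n, hwn, hn⟩ := hβ A ⟨v, hvA⟩
    by_cases hwK : w ∉ K
    · exact ⟨w, hwA, hwK, n, hwn, hn⟩
    by_cases hAn : ∀ u ∈ A, u ∈ β n
    · exact ⟨v, hvA, hvK, n, hAn v hvA, fun u hu _ _ _ => hAn u hu⟩
    have hAn' : ¬ ((A.erase w : Finset V) : Set V) ⊆ β n := fun h =>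
      hAn fun u hu => (eq_or_ne u w).elim (· ▸ hwn) fun huw => h (Finset.mem_erase.2 ⟨huw, hu⟩)
    obtain ⟨u, hu, hun, k, huk, hk⟩ := ih _ (Finset.erase_ssubset hwA) ⟨n, subset_rfl⟩ hAn'
    have huA : u ∈ A := Finset.mem_of_mem_erase hu
    have hsep : ∀ m, u ∈ β m → w ∉ β m := fun m hum hwm => hun (hn u huA m hum hwm)
    refine ⟨u, huA, fun huK => ?_, k, huk, fun z hz m hzm hum => ?_⟩
    · obtain ⟨n₀, hn₀⟩ := hK
      exact hsep n₀ (hn₀ huK) (hn₀ (not_not.1 hwK))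
    · have hzw : z ≠ w := fun h => hsep m hum (h ▸ hzm)
      exact hk z (Finset.mem_erase.2 ⟨hzw, hz⟩) m hzm hum

end SimplicialVertices

section TreeDecomposition

variable {V : Type*} {N : Type} {par : N → Option N} {r : N} {β : N → Set V}

theorem Anc.total {a b n : N} (ha : Anc par a n) (hb : Anc par b n) :
    Anc par a b ∨ Anc par b a :=
  Relation.ReflTransGen.total_of_right_unique
    (fun _ _ _ h h' => Option.some.inj (h.symm.trans h')) hb ha

theorem wellFounded_parent_of_root (hr : par r = none) (hroot : ∀ n, Anc par r n) :
    WellFounded fun a b => par b = some a := by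
  refine ⟨fun n => ?_⟩
  induction hroot n using Relation.ReflTransGen.head_induction_on with
  | refl => exact ⟨_, fun a ha => by simp [hr] at ha⟩
  | head hpar _ ih => exact ⟨_, fun a ha => Option.some.inj (hpar.symm.trans ha) ▸ ih⟩

theorem exists_lowest_common_anc (hroot : ∀ n, Anc par r n) (n₁ n₂ : N) :
    ∃ m, Anc par m n₁ ∧ Anc par m n₂ ∧
      ∀ m', Anc par m' n₁ → Anc par m' n₂ → Anc par m' m := by
  induction hroot n₁ using Relation.ReflTransGen.head_induction_on with
  | refl => exact ⟨r, .refl, hroot n₂, fun _ h _ => h⟩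
  | @head n c hpar _ ih =>
    by_cases hn : Anc par n n₂
    · exact ⟨n, .refl, hn, fun _ h _ => h⟩
    obtain ⟨m, hmc, hm₂, hlow⟩ := ih
    refine ⟨m, .head hpar hmc, hm₂, fun m' h₁ h₂ => hlow m' ?_ h₂⟩
    obtain rfl | ⟨c', hc', h⟩ := Relation.ReflTransGen.cases_head h₁
    · exact (hn h₂).elim
    · rwa [Option.some.inj (hpar.symm.trans hc')]

theorem exists_anc_of_lowest_common_anc_mem (hr : par r = none) (hroot : ∀ n, Anc par r n)
    {S : Set N} (hS : S.Nonempty)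
    (hlca : ∀ n₁ n₂ m, n₁ ∈ S → n₂ ∈ S → Anc par m n₁ → Anc par m n₂ →
      (∀ m', Anc par m' n₁ → Anc par m' n₂ → Anc par m' m) → m ∈ S) :
    ∃ t ∈ S, ∀ n ∈ S, Anc par t n := by
  obtain ⟨t, ht, hmin⟩ := (wellFounded_parent_of_root hr hroot).transGen.has_min S hS
  refine ⟨t, ht, fun n hn => ?_⟩
  obtain ⟨m, hmt, hmn, hlow⟩ := exists_lowest_common_anc hroot t n
  have hm : m ∈ S := hlca t n m ht hn hmt hmn hlow
  obtain rfl | hlt := Relation.reflTransGen_iff_eq_or_transGen.1 hmt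
  · exact hmn
  · exact (hmin m hm (Relation.transGen_swap.2 hlt)).elim

-- A vertex of `A` whose topmost bag is lowest possible is simplicial, by way of that bag.
theorem hasSimplicialVertices_of_topmost {t : V → N} (ht : ∀ v, v ∈ β (t v))
    (htop : ∀ v n, v ∈ β n → Anc par (t v) n)
    (hpath : ∀ v n m k, v ∈ β n → v ∈ β m → Anc par m n → Anc par k n → Anc par m k → v ∈ β k) :
    HasSimplicialVertices β := by
  intro A hA
  let _ : Preorder N :=
    { le := Anc par
      le_refl := fun _ => .refl
      le_trans := fun _ _ _ h h' => Relation.ReflTransGen.trans h' h }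
  obtain ⟨w, hwA, hlowest⟩ := A.exists_maximalFor t hA
  refine ⟨w, hwA, t w, ht w, fun u hu m hum hwm => ?_⟩
  have huw : Anc par (t u) (t w) := (Anc.total (htop u m hum) (htop w m hwm)).elim id (hlowest hu)
  exact hpath u m (t u) (t w) hum (ht u) (htop u m hum) (htop w m hwm) huw

theorem TWle2.exists_hasSimplicialVertices {L : Type} {G : BGraph L} (htw : TWle2 G) :
    ∃ (N : Type) (β : N → Set G.V), HasSimplicialVertices β ∧
      (∀ e : G.E, ∃ n, (G.att e).1 ∈ β n ∧ (G.att e).2 ∈ β n) ∧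
      ∀ n, (β n).Finite ∧ (β n).ncard ≤ 3 := by
  obtain ⟨N, par, β, ⟨r, hr, hroot⟩, hedge, hcov, hpath, hlca, hcard⟩ := htw
  have htop : ∀ v, ∃ t, v ∈ β t ∧ ∀ n, v ∈ β n → Anc par t n := fun v =>
    exists_anc_of_lowest_common_anc_mem (S := {n | v ∈ β n}) hr hroot (hcov v) (hlca v)
  choose t ht htop using htop
  exact ⟨N, β, hasSimplicialVertices_of_topmost ht htop hpath, hedge, hcard⟩

end TreeDecomposition

section SourcesOfCompositions

variable {L : Type} {G H : G2 L}

theorem parG_s1_ne_s2 (hG : G.s1 ≠ G.s2) (hH : H.s1 ≠ H.s2) :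
    (parG G H).s1 ≠ (parG G H).s2 := by
  let isS1 : (parG G H).V → Prop :=
    Quot.lift (Sum.elim (· = G.s1) (· = H.s1)) (by
      rintro _ _ (⟨rfl, rfl⟩ | ⟨rfl, rfl⟩) <;> simp [hG.symm, hH.symm])
  intro h
  have hs : (G.s1 = G.s1) = (G.s2 = G.s1) := congrArg isS1 h
  exact hG (hs.mp rfl).symm

theorem serG_inl_eq_inr {u : G.V} {v : H.V}
    (h : Quot.mk (serRel G H) (.inl u) = Quot.mk (serRel G H) (.inr v)) :
    u = G.s2 ∧ v = H.s1 := by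
  let isGlued : (serG G H).V → Prop × Prop :=
    Quot.lift (Sum.elim (fun u => (u = G.s2, True)) (fun v => (True, v = H.s1))) (by
      rintro _ _ ⟨rfl, rfl⟩; simp)
  have hg : (u = G.s2, True) = (True, v = H.s1) := congrArg isGlued h
  simpa using hg

theorem serG_s1_ne_s2 (hH : H.s1 ≠ H.s2) : (serG G H).s1 ≠ (serG G H).s2 :=
  fun h => hH (serG_inl_eq_inr h).2.symm

theorem IsDSP.s1_ne_s2 (h : IsDSP G) : G.s1 ≠ G.s2 := by
  induction h with
  | edge _ => exact Bool.false_ne_true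
  | redge _ => exact Bool.false_ne_true
  | par _ _ ihG ihH => exact parG_s1_ne_s2 ihG ihH
  | ser _ _ _ ihH => exact serG_s1_ne_s2 ihH
  | iso _ i ih =>
    rw [← i.s1_comm, ← i.s2_comm]
    exact i.vEquiv.injective.ne ih

/-- The edge `e` joins the two sources of `G`, in either direction. -/
def JoinsSources (G : G2 L) (e : G.E) : Prop :=
  s((G.att e).1, (G.att e).2) = s(G.s1, G.s2)

theorem JoinsSources.map {e : G.E} (he : JoinsSources G e) (i : GIso G H) :
    JoinsSources H (i.eEquiv e) := by
  have := congrArg (Sym2.map i.vEquiv) he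
  simpa only [JoinsSources, i.att_comm, ← i.s1_comm, ← i.s2_comm, Sym2.map_mk] using this

theorem not_joinsSources_serG (hG : G.s1 ≠ G.s2) (hH : H.s1 ≠ H.s2) (e : (serG G H).E) :
    ¬ JoinsSources (serG G H) e := by
  intro he
  have hs1 := Sym2.mem_iff.1 (he.symm ▸ Sym2.mem_mk_left (serG G H).s1 (serG G H).s2)
  have hs2 := Sym2.mem_iff.1 (he.symm ▸ Sym2.mem_mk_right (serG G H).s1 (serG G H).s2)
  obtain e | e := e
  · obtain h | h := hs2 <;> exact hH (serG_inl_eq_inr h.symm).2.symm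
  · obtain h | h := hs1 <;> exact hG (serG_inl_eq_inr h).1

theorem JoinsSources.not_giso_serG {K : G2 L} {e : K.E} (he : JoinsSources K e)
    (hG : IsDSP G) (hH : IsDSP H) : ¬ Nonempty (GIso K (serG G H)) :=
  fun ⟨i⟩ => not_joinsSources_serG hG.s1_ne_s2 hH.s1_ne_s2 _ (he.map i)

theorem joinsSources_subG2 {G : BGraph L} {VS : Set G.V} {ES : Set G.E} (hsub : IsSub G VS ES)
    {x y : G.V} (hx : x ∈ VS) (hy : y ∈ VS) {e : G.E} (he : e ∈ ES)
    (hexy : s((G.att e).1, (G.att e).2) = s(x, y)) :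
    JoinsSources (subG2 G VS ES hsub x y hx hy) ⟨e, he⟩ :=
  Sym2.map.injective Subtype.val_injective hexy

end SourcesOfCompositions

section UnionOfSubgraphs

/-- A quotient of the disjoint union of two sets that identifies exactly the two copies of each
common element is their union. -/
noncomputable def quotSumEquivUnion {α : Type*} {S T : Set α} (r : S ⊕ T → S ⊕ T → Prop)
    (hr : ∀ a b, r a b → Sum.elim ((↑) : S → α) (↑) a = Sum.elim ((↑) : S → α) (↑) b)
    (hST : ∀ u (hS : u ∈ S) (hT : u ∈ T),
      Quot.mk r (.inl ⟨u, hS⟩) = Quot.mk r (.inr ⟨u, hT⟩)) :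
    Quot r ≃ ↥(S ∪ T) :=
  Equiv.ofBijective
    (Quot.lift (Sum.elim (Set.inclusion Set.subset_union_left)
        (Set.inclusion Set.subset_union_right)) (by
      rintro (a | a) (b | b) h <;> exact Subtype.ext (hr _ _ h))) (by
    constructor
    · rintro ⟨⟨a, ha⟩ | ⟨a, ha⟩⟩ ⟨⟨b, hb⟩ | ⟨b, hb⟩⟩ h <;>
        obtain rfl : a = b := congrArg Subtype.val h
      exacts [rfl, hST a ha hb, (hST a hb ha).symm, rfl]
    · rintro ⟨c, hc | hc⟩
      exacts [⟨Quot.mk r (.inl ⟨c, hc⟩), rfl⟩, ⟨Quot.mk r (.inr ⟨c, hc⟩), rfl⟩])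

/-- The bijection `false ↦ a`, `true ↦ b`. -/
noncomputable def boolEquivPair {α : Type*} {a b : α} (hab : a ≠ b) : Bool ≃ ({a, b} : Set α) :=
  Equiv.ofBijective (fun t => ⟨cond t b a, by cases t <;> simp⟩) (by
    constructor
    · rintro (_ | _) (_ | _) h <;> simp_all [hab.symm]
    · rintro ⟨c, rfl | rfl⟩
      exacts [⟨false, rfl⟩, ⟨true, rfl⟩])

variable {L : Type} {G : BGraph L}

theorem IsSub.edge (e : G.E) : IsSub G {(G.att e).1, (G.att e).2} {e} := by
  rintro _ rfl
  exact ⟨.inl rfl, .inr rfl⟩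

theorem isDSP_subG2_edge {e : G.E} (he : (G.att e).1 ≠ (G.att e).2) :
    IsDSP (subG2 G {(G.att e).1, (G.att e).2} {e} (.edge e) (G.att e).1 (G.att e).2
      (.inl rfl) (.inr rfl)) :=
  .iso (.edge (G.lab e))
    { vEquiv := boolEquivPair he
      eEquiv := Equiv.ofUnique Unit ({e} : Set G.E)
      att_comm := fun _ => rfl
      lab_comm := fun _ => rfl
      s1_comm := rfl
      s2_comm := rfl }

theorem isDSP_subG2_edge_reverse {e : G.E} (he : (G.att e).1 ≠ (G.att e).2) :
    IsDSP (subG2 G {(G.att e).1, (G.att e).2} {e} (.edge e) (G.att e).2 (G.att e).1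
      (.inr rfl) (.inl rfl)) :=
  .iso (.redge (G.lab e))
    { vEquiv := Equiv.boolNot.trans (boolEquivPair he)
      eEquiv := Equiv.ofUnique Unit ({e} : Set G.E)
      att_comm := fun _ => rfl
      lab_comm := fun _ => rfl
      s1_comm := rfl
      s2_comm := rfl }

variable {V₁ V₂ : Set G.V} {E₁ E₂ : Set G.E}

theorem IsSub.union (h₁ : IsSub G V₁ E₁) (h₂ : IsSub G V₂ E₂) :
    IsSub G (V₁ ∪ V₂) (E₁ ∪ E₂) := by
  rintro e (he | he)
  · exact ⟨.inl (h₁ e he).1, .inl (h₁ e he).2⟩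
  · exact ⟨.inr (h₂ e he).1, .inr (h₂ e he).2⟩

theorem isDSP_subG2_union_of_parallel {a b : G.V} {h₁ : IsSub G V₁ E₁} {h₂ : IsSub G V₂ E₂}
    {ha₁ : a ∈ V₁} {hb₁ : b ∈ V₁} {ha₂ : a ∈ V₂} {hb₂ : b ∈ V₂}
    (hV : V₁ ∩ V₂ ⊆ {a, b}) (hE : Disjoint E₁ E₂)
    (hP₁ : IsDSP (subG2 G V₁ E₁ h₁ a b ha₁ hb₁)) (hP₂ : IsDSP (subG2 G V₂ E₂ h₂ a b ha₂ hb₂)) :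
    IsDSP (subG2 G (V₁ ∪ V₂) (E₁ ∪ E₂) (h₁.union h₂) a b (.inl ha₁) (.inl hb₁)) := by
  classical
  refine .iso (.par hP₁ hP₂)
    { vEquiv := quotSumEquivUnion _ ?_ ?_
      eEquiv := (Equiv.Set.union hE).symm
      att_comm := by rintro (e | e) <;> rfl
      lab_comm := by rintro (e | e) <;> rfl
      s1_comm := rfl
      s2_comm := rfl }
  · rintro _ _ (⟨rfl, rfl⟩ | ⟨rfl, rfl⟩) <;> rfl
  · intro u hu₁ hu₂
    obtain rfl | rfl := hV ⟨hu₁, hu₂⟩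
    exacts [Quot.sound (.inl ⟨rfl, rfl⟩), Quot.sound (.inr ⟨rfl, rfl⟩)]

theorem isDSP_subG2_union_of_series {a v b : G.V} {h₁ : IsSub G V₁ E₁} {h₂ : IsSub G V₂ E₂}
    {ha : a ∈ V₁} {hv₁ : v ∈ V₁} {hv₂ : v ∈ V₂} {hb : b ∈ V₂}
    (hV : V₁ ∩ V₂ ⊆ {v}) (hE : Disjoint E₁ E₂)
    (hS₁ : IsDSP (subG2 G V₁ E₁ h₁ a v ha hv₁)) (hS₂ : IsDSP (subG2 G V₂ E₂ h₂ v b hv₂ hb)) :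
    IsDSP (subG2 G (V₁ ∪ V₂) (E₁ ∪ E₂) (h₁.union h₂) a b (.inl ha) (.inr hb)) := by
  classical
  refine .iso (.ser hS₁ hS₂)
    { vEquiv := quotSumEquivUnion _ ?_ ?_
      eEquiv := (Equiv.Set.union hE).symm
      att_comm := by rintro (e | e) <;> rfl
      lab_comm := by rintro (e | e) <;> rfl
      s1_comm := rfl
      s2_comm := rfl }
  · rintro _ _ ⟨rfl, rfl⟩
    rfl
  · intro u hu₁ hu₂
    obtain rfl := hV ⟨hu₁, hu₂⟩
    exact Quot.sound ⟨rfl, rfl⟩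

end UnionOfSubgraphs

/-- A subgraph of `G` with an unordered pair of ends, which is a disoriented series-parallel graph
whichever of the two ends is taken as its 1-source. -/
structure DSPPiece {L : Type} (G : BGraph L) where
  verts : Set G.V
  edges : Set G.E
  ends : Sym2 G.V
  isSub : IsSub G verts edges
  ends_subset : ∀ v ∈ ends, v ∈ verts
  isDSP : ∀ x y (hx : x ∈ verts) (hy : y ∈ verts), ends = s(x, y) →
    IsDSP (subG2 G verts edges isSub x y hx hy)

namespace DSPPiece

variable {L : Type} {G : BGraph L}

/-- The piece consisting of a single edge and its endpoints. -/
def single (e : G.E) (he : (G.att e).1 ≠ (G.att e).2) : DSPPiece G where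
  verts := {(G.att e).1, (G.att e).2}
  edges := {e}
  ends := s((G.att e).1, (G.att e).2)
  isSub := .edge e
  ends_subset _ hv := Sym2.mem_iff.1 hv
  isDSP x y hx hy h := by
    obtain ⟨rfl, rfl⟩ | ⟨rfl, rfl⟩ := Sym2.eq_iff.1 h
    exacts [isDSP_subG2_edge he, isDSP_subG2_edge_reverse he]

/-- The union of two pieces with the same ends that share nothing else. -/
def parallel (p q : DSPPiece G) (hpq : p.ends = q.ends)
    (hV : ∀ u ∈ p.verts, u ∈ q.verts → u ∈ p.ends) (hE : Disjoint p.edges q.edges) :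
    DSPPiece G where
  verts := p.verts ∪ q.verts
  edges := p.edges ∪ q.edges
  ends := p.ends
  isSub := p.isSub.union q.isSub
  ends_subset v hv := .inl (p.ends_subset v hv)
  isDSP x y _ _ h := by
    have hends : ∀ v ∈ s(x, y), v ∈ p.verts ∧ v ∈ q.verts := fun v hv =>
      ⟨p.ends_subset v (h ▸ hv), q.ends_subset v (hpq ▸ h ▸ hv)⟩
    have hx := hends x (Sym2.mem_mk_left x y)
    have hy := hends y (Sym2.mem_mk_right x y)
    have hinter : p.verts ∩ q.verts ⊆ {x, y} := fun u hu =>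
      Sym2.mem_iff.1 (h ▸ hV u hu.1 hu.2)
    exact isDSP_subG2_union_of_parallel hinter hE (p.isDSP x y hx.1 hy.1 h)
      (q.isDSP x y hx.2 hy.2 (hpq ▸ h))

/-- The union of two pieces that share one end `v` and nothing else. -/
def series (p q : DSPPiece G) {v b c : G.V} (hp : p.ends = s(v, b)) (hq : q.ends = s(v, c))
    (hV : ∀ u ∈ p.verts, u ∈ q.verts → u = v) (hE : Disjoint p.edges q.edges) :
    DSPPiece G where
  verts := p.verts ∪ q.verts
  edges := p.edges ∪ q.edges
  ends := s(b, c)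
  isSub := p.isSub.union q.isSub
  ends_subset u hu := by
    obtain rfl | rfl := Sym2.mem_iff.1 hu
    exacts [.inl (p.ends_subset u (hp ▸ Sym2.mem_mk_right v u)),
      .inr (q.ends_subset u (hq ▸ Sym2.mem_mk_right v u))]
  isDSP x y _ _ h := by
    have hvp := p.ends_subset v (hp ▸ Sym2.mem_mk_left v b)
    have hbp := p.ends_subset b (hp ▸ Sym2.mem_mk_right v b)
    have hvq := q.ends_subset v (hq ▸ Sym2.mem_mk_left v c)
    have hcq := q.ends_subset c (hq ▸ Sym2.mem_mk_right v c)
    obtain ⟨rfl, rfl⟩ | ⟨rfl, rfl⟩ := Sym2.eq_iff.1 h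
    · exact isDSP_subG2_union_of_series (fun u hu => hV u hu.1 hu.2) hE
        (p.isDSP b v hbp hvp (hp.trans Sym2.eq_swap)) (q.isDSP v c hvq hcq hq)
    · have hqp := isDSP_subG2_union_of_series (fun u hu => hV u hu.2 hu.1) hE.symm
        (q.isDSP c v hcq hvq (hq.trans Sym2.eq_swap)) (p.isDSP v b hvp hbp hp)
      simpa only [Set.union_comm p.verts, Set.union_comm p.edges] using hqp

theorem ne_of_ends_eq (p : DSPPiece G) {x y : G.V} (h : p.ends = s(x, y)) : x ≠ y := by
  have hx := p.ends_subset x (h ▸ Sym2.mem_mk_left x y)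
  have hy := p.ends_subset y (h ▸ Sym2.mem_mk_right x y)
  exact fun hxy => (p.isDSP x y hx hy h).s1_ne_s2 (Subtype.ext hxy)

end DSPPiece

/-- `P` splits the subgraph `(VS, ES)` of `G` into pieces that meet only at their ends, in such a
way that the terminals `T` are never interior to a piece and that the two ends of each piece share
a bag of `β`. -/
structure IsDecomposition {L : Type} {N : Type*} (G : BGraph L) (β : N → Set G.V) (VS : Set G.V)
    (ES : Set G.E) (T : Set G.V) (P : Finset (DSPPiece G)) : Prop where
  mem_verts_iff : ∀ u, u ∈ VS ↔ ∃ p ∈ P, u ∈ p.verts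
  mem_edges_iff : ∀ e, e ∈ ES ↔ ∃ p ∈ P, e ∈ p.edges
  disjoint_edges : ∀ p ∈ P, ∀ q ∈ P, p ≠ q → Disjoint p.edges q.edges
  mem_ends_of_shared : ∀ p ∈ P, ∀ q ∈ P, p ≠ q → ∀ u ∈ p.verts, u ∈ q.verts → u ∈ p.ends
  mem_ends_of_terminal : ∀ p ∈ P, ∀ u ∈ p.verts, u ∈ T → u ∈ p.ends
  exists_bag : ∀ p ∈ P, ∃ n, ∀ u ∈ p.ends, u ∈ β n

section ReplacePair

variable {α : Type*} [DecidableEq α] {P : Finset α} {p q : α}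

theorem card_insert_sdiff_pair_lt (hp : p ∈ P) (hq : q ∈ P) (hpq : p ≠ q) (r : α) :
    (insert r (P \ {p, q})).card < P.card := by
  have hsub : {p, q} ⊆ P := by simp [Finset.insert_subset_iff, hp, hq]
  have hle := Finset.card_le_card hsub
  have hins := Finset.card_insert_le r (P \ {p, q})
  rw [Finset.card_sdiff_of_subset hsub] at hins
  rw [Finset.card_pair hpq] at hins hle
  omega

theorem mem_insert_sdiff_pair {r s : α} :
    s ∈ insert r (P \ {p, q}) ↔ s = r ∨ s ∈ P ∧ s ≠ p ∧ s ≠ q := by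
  simp

theorem exists_mem_insert_sdiff_pair_iff {γ : Type*} (hp : p ∈ P) (hq : q ∈ P) {f : α → Set γ}
    {r : α} (hr : f r = f p ∪ f q) (x : γ) :
    (∃ s ∈ insert r (P \ {p, q}), x ∈ f s) ↔ ∃ s ∈ P, x ∈ f s := by
  constructor
  · rintro ⟨s, hs, hx⟩
    obtain rfl | ⟨hs, -, -⟩ := mem_insert_sdiff_pair.1 hs
    · obtain hx | hx := hr ▸ hx
      exacts [⟨p, hp, hx⟩, ⟨q, hq, hx⟩]
    · exact ⟨s, hs, hx⟩
  · rintro ⟨s, hs, hx⟩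
    by_cases hsr : x ∈ f r
    · exact ⟨r, mem_insert_sdiff_pair.2 (.inl rfl), hsr⟩
    · have hxpq : x ∉ f p ∧ x ∉ f q := by simpa [hr] using hsr
      refine ⟨s, mem_insert_sdiff_pair.2 (.inr ⟨hs, ?_, ?_⟩), hx⟩ <;> rintro rfl
      exacts [hxpq.1 hx, hxpq.2 hx]

end ReplacePair

section Adjacency

variable {L : Type} {G : BGraph L} {VS : Set G.V} {ES : Set G.E}

theorem ConnSub.exists_adjIn (hconn : ConnSub G VS ES) (hVS : VS.Nontrivial) {u : G.V}
    (hu : u ∈ VS) : ∃ v, adjIn G VS ES u v := by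
  obtain ⟨w, hw, hwu⟩ := hVS.exists_ne u
  obtain rfl | ⟨v, huv, -⟩ := Relation.ReflTransGen.cases_head (hconn.2 u hu w hw)
  exacts [(hwu rfl).elim, ⟨v, huv⟩]

theorem adjIn.exists_edge {u v : G.V} (h : adjIn G VS ES u v) :
    ∃ e ∈ ES, s((G.att e).1, (G.att e).2) = s(u, v) := by
  obtain ⟨-, -, e, he, h | h⟩ := h
  exacts [⟨e, he, by rw [h]⟩, ⟨e, he, by rw [h, Sym2.eq_swap]⟩]

theorem adjIn.ne {u v : G.V} (h : adjIn G VS ES u v)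
    (hsl : ∀ e ∈ ES, (G.att e).1 ≠ (G.att e).2) : u ≠ v := by
  obtain ⟨e, he, heuv⟩ := h.exists_edge
  rintro rfl
  exact hsl e he (Sym2.mk_isDiag_iff.1 (heuv ▸ Sym2.mk_isDiag_iff.2 rfl))

end Adjacency

namespace IsDecomposition

variable {L : Type} {N : Type*} {G : BGraph L} {β : N → Set G.V} {VS : Set G.V} {ES : Set G.E}
  {T : Set G.V} {P : Finset (DSPPiece G)}

theorem exists_of_singles (hsub : IsSub G VS ES) (hES : ES.Finite)
    (hsl : ∀ e ∈ ES, (G.att e).1 ≠ (G.att e).2) (hcov : ∀ u ∈ VS, ∃ v, adjIn G VS ES u v)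
    (hbag : ∀ e ∈ ES, ∃ n, (G.att e).1 ∈ β n ∧ (G.att e).2 ∈ β n) (T : Set G.V) :
    ∃ P, IsDecomposition G β VS ES T P := by
  classical
  let _ := hES.fintype
  let piece : ES → DSPPiece G := fun e => .single e (hsl e e.2)
  have hverts : ∀ e, ∀ u ∈ (piece e).verts, u ∈ VS := by
    rintro e u (rfl | rfl)
    exacts [(hsub e e.2).1, (hsub e e.2).2]
  refine ⟨Finset.univ.image piece, ?_, ?_, ?_, ?_, ?_, ?_⟩ <;>
    simp only [Finset.mem_image, Finset.mem_univ, true_and, exists_exists_eq_and,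
      forall_exists_index, forall_apply_eq_imp_iff]
  · refine fun u => ⟨fun hu => ?_, fun ⟨e, hu⟩ => hverts e u hu⟩
    obtain ⟨v, -, -, e, he, h | h⟩ := hcov u hu
    exacts [⟨⟨e, he⟩, .inl (congrArg Prod.fst h).symm⟩, ⟨⟨e, he⟩, .inr (congrArg Prod.snd h).symm⟩]
  · exact fun e => ⟨fun he => ⟨⟨e, he⟩, rfl⟩, fun ⟨e', he⟩ => he ▸ e'.2⟩
  · exact fun e e' hne => Set.disjoint_singleton.2 fun h => hne (congrArg piece (Subtype.ext h))
  · exact fun e _ _ u hu _ => Sym2.mem_iff.2 hu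
  · exact fun e u hu _ => Sym2.mem_iff.2 hu
  · intro e
    obtain ⟨n, h₁, h₂⟩ := hbag e e.2
    exact ⟨n, Sym2.forall_mem_pair.2 ⟨h₁, h₂⟩⟩

theorem replace_pair [DecidableEq (DSPPiece G)] (hP : IsDecomposition G β VS ES T P)
    {p q r : DSPPiece G} (hp : p ∈ P) (hq : q ∈ P)
    (hverts : r.verts = p.verts ∪ q.verts) (hedges : r.edges = p.edges ∪ q.edges)
    (hends : ∀ u, u ∈ p.ends ∨ u ∈ q.ends → u ∉ r.ends →
      u ∉ T ∧ ∀ s ∈ P, u ∈ s.ends → s = p ∨ s = q)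
    (hbag : ∃ n, ∀ u ∈ r.ends, u ∈ β n) :
    IsDecomposition G β VS ES T (insert r (P \ {p, q})) := by
  have hshared : ∀ s ∈ P, s ≠ p → s ≠ q → ∀ u ∈ s.verts, u ∈ r.verts →
      u ∈ s.ends ∧ u ∈ r.ends := by
    intro s hs hsp hsq u hus hur
    obtain ⟨hs_end, hpq_end⟩ : u ∈ s.ends ∧ (u ∈ p.ends ∨ u ∈ q.ends) := by
      obtain hu | hu := hverts ▸ hur
      · exact ⟨hP.mem_ends_of_shared s hs p hp hsp u hus hu,
          .inl (hP.mem_ends_of_shared p hp s hs hsp.symm u hu hus)⟩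
      · exact ⟨hP.mem_ends_of_shared s hs q hq hsq u hus hu,
          .inr (hP.mem_ends_of_shared q hq s hs hsq.symm u hu hus)⟩
    refine ⟨hs_end, by_contra fun hr => ?_⟩
    exact ((hends u hpq_end hr).2 s hs hs_end).elim hsp hsq
  have hdisj : ∀ s ∈ P, s ≠ p → s ≠ q → Disjoint r.edges s.edges := fun s hs hsp hsq =>
    hedges ▸ Set.disjoint_union_left.2 ⟨hP.disjoint_edges p hp s hs hsp.symm,
      hP.disjoint_edges q hq s hs hsq.symm⟩
  refine ⟨fun u => ?_, fun e => ?_, fun s hs s' hs' hne => ?_, fun s hs s' hs' hne u hu hu' => ?_,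
    fun s hs u hu huT => ?_, fun s hs => ?_⟩
  · rw [exists_mem_insert_sdiff_pair_iff hp hq hverts, hP.mem_verts_iff]
  · rw [exists_mem_insert_sdiff_pair_iff hp hq hedges, hP.mem_edges_iff]
  · obtain rfl | ⟨hsP, hsp, hsq⟩ := mem_insert_sdiff_pair.1 hs <;>
      obtain rfl | ⟨hsP', hsp', hsq'⟩ := mem_insert_sdiff_pair.1 hs'
    exacts [(hne rfl).elim, hdisj s' hsP' hsp' hsq', (hdisj s hsP hsp hsq).symm,
      hP.disjoint_edges s hsP s' hsP' hne]
  · obtain rfl | ⟨hsP, hsp, hsq⟩ := mem_insert_sdiff_pair.1 hs <;>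
      obtain rfl | ⟨hsP', hsp', hsq'⟩ := mem_insert_sdiff_pair.1 hs'
    exacts [(hne rfl).elim, (hshared s' hsP' hsp' hsq' u hu' hu).2,
      (hshared s hsP hsp hsq u hu hu').1, hP.mem_ends_of_shared s hsP s' hsP' hne u hu hu']
  · obtain rfl | ⟨hs, -, -⟩ := mem_insert_sdiff_pair.1 hs
    · have hpq_end : u ∈ p.ends ∨ u ∈ q.ends := (hverts ▸ hu).imp
        (hP.mem_ends_of_terminal p hp u · huT) (hP.mem_ends_of_terminal q hq u · huT)
      exact by_contra fun hr => (hends u hpq_end hr).1 huT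
    · exact hP.mem_ends_of_terminal s hs u hu huT
  · obtain rfl | ⟨hs, -, -⟩ := mem_insert_sdiff_pair.1 hs
    exacts [hbag, hP.exists_bag s hs]

theorem exists_card_lt_of_ends_eq (hP : IsDecomposition G β VS ES T P) {p q : DSPPiece G}
    (hp : p ∈ P) (hq : q ∈ P) (hpq : p ≠ q) (hends : p.ends = q.ends) :
    ∃ P', IsDecomposition G β VS ES T P' ∧ P'.card < P.card := by
  classical
  let r := p.parallel q hends (hP.mem_ends_of_shared p hp q hq hpq)
    (hP.disjoint_edges p hp q hq hpq)
  have hr : ∀ u, u ∈ p.ends ∨ u ∈ q.ends → u ∈ r.ends := fun u hu => hu.elim id (hends ▸ ·)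
  exact ⟨insert r (P \ {p, q}), hP.replace_pair hp hq rfl rfl (fun u hu hur => (hur (hr u hu)).elim)
    (hP.exists_bag p hp), card_insert_sdiff_pair_lt hp hq hpq r⟩

theorem exists_card_lt_of_series (hP : IsDecomposition G β VS ES T P) {p q : DSPPiece G}
    (hp : p ∈ P) (hq : q ∈ P) {v b c : G.V} (hvb : p.ends = s(v, b)) (hvc : q.ends = s(v, c))
    (hbc : b ≠ c) (hvT : v ∉ T) (honly : ∀ s ∈ P, v ∈ s.ends → s = p ∨ s = q)
    (hbag : ∃ n, b ∈ β n ∧ c ∈ β n) :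
    ∃ P', IsDecomposition G β VS ES T P' ∧ P'.card < P.card := by
  classical
  have hpq : p ≠ q := by
    rintro rfl
    exact hbc (Sym2.congr_right.1 (hvb.symm.trans hvc))
  have hinter : ∀ u ∈ p.verts, u ∈ q.verts → u = v := fun u hup huq => by
    have hub := Sym2.mem_iff.1 (hvb ▸ hP.mem_ends_of_shared p hp q hq hpq u hup huq)
    have huc := Sym2.mem_iff.1 (hvc ▸ hP.mem_ends_of_shared q hq p hp hpq.symm u huq hup)
    grind
  let r := p.series q hvb hvc hinter (hP.disjoint_edges p hp q hq hpq)
  have hlost : ∀ u, u ∈ p.ends ∨ u ∈ q.ends → u ∉ r.ends → u = v := fun u hu hur => by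
    have hur : u ≠ b ∧ u ≠ c := not_or.1 fun h => hur (Sym2.mem_iff.2 h)
    rw [hvb, hvc, Sym2.mem_iff, Sym2.mem_iff] at hu
    tauto
  exact ⟨insert r (P \ {p, q}), hP.replace_pair hp hq rfl rfl
    (fun u hu hur => hlost u hu hur ▸ ⟨hvT, honly⟩)
    (hbag.imp fun _ => Sym2.forall_mem_pair.2), card_insert_sdiff_pair_lt hp hq hpq r⟩

-- A path avoiding `c` can leave a piece with ends `v` and `c` only through `v`.
theorem exists_piece_of_connIn_compl (hP : IsDecomposition G β VS ES T P) {v c : G.V}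
    (hends : ∀ q ∈ P, v ∈ q.ends → q.ends = s(v, c)) {p : DSPPiece G} (hp : p ∈ P)
    (hv : v ∈ p.ends) {t : G.V}
    (hpath : connIn G (VS \ {c}) (ES \ {e | (G.att e).1 = c ∨ (G.att e).2 = c}) v t) :
    ∃ q ∈ P, v ∈ q.ends ∧ t ∈ q.verts := by
  induction hpath with
  | refl => exact ⟨p, hp, hv, p.ends_subset v hv⟩
  | @tail u u' _ hstep ih =>
    obtain ⟨q, hq, hvq, huq⟩ := ih
    obtain ⟨hu, -, e, ⟨he, -⟩, hatt⟩ := hstep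
    obtain ⟨r, hr, her⟩ := (hP.mem_edges_iff e).1 he
    have hur : u ∈ r.verts ∧ u' ∈ r.verts := by
      have hsub := r.isSub e her
      obtain h | h := hatt <;> rw [h] at hsub
      exacts [hsub, hsub.symm]
    obtain rfl | hqr := eq_or_ne q r
    · exact ⟨q, hq, hvq, hur.2⟩
    obtain rfl | huc := Sym2.mem_iff.1
      (hends q hq hvq ▸ hP.mem_ends_of_shared q hq r hr hqr u huq hur.1)
    · exact ⟨r, hr, hP.mem_ends_of_shared r hr q hq hqr.symm u hur.1 huq, hur.2⟩
    · exact (hu.2 huc).elim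

theorem mem_verts (hP : IsDecomposition G β VS ES T P) {p : DSPPiece G} (hp : p ∈ P) {u : G.V}
    (hu : u ∈ p.ends) : u ∈ VS :=
  (hP.mem_verts_iff u).2 ⟨p, hp, p.ends_subset u hu⟩

theorem exists_piece_avoiding (hP : IsDecomposition G β VS ES T P) (hconn : ConnSub G VS ES)
    (hcut : ¬ ∃ w, CutvertexIn G VS ES w) {p : DSPPiece G} (hp : p ∈ P) {v c t : G.V}
    (hvc : p.ends = s(v, c)) (ht : t ∈ VS) (htT : t ∈ T) (hvt : v ≠ t) (hct : c ≠ t) :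
    ∃ q ∈ P, v ∈ q.ends ∧ c ∉ q.ends := by
  by_contra! hall
  have hvp : v ∈ p.ends := hvc ▸ Sym2.mem_mk_left v c
  have hvS : v ∈ VS := hP.mem_verts hp hvp
  have hcS : c ∈ VS := hP.mem_verts hp (hvc ▸ Sym2.mem_mk_right v c)
  have hne : v ≠ c := p.ne_of_ends_eq hvc
  have hends : ∀ q ∈ P, v ∈ q.ends → q.ends = s(v, c) := fun q hq hvq =>
    (Sym2.mem_and_mem_iff hne).1 ⟨hvq, hall q hq hvq⟩
  have hpath : connIn G (VS \ {c}) (ES \ {e | (G.att e).1 = c ∨ (G.att e).2 = c}) v t :=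
    by_contra fun h => hcut ⟨c, hcS, v, t, hvS, ht, hne, hct.symm, hconn.2 v hvS t ht, h⟩
  obtain ⟨q, hq, hvq, htq⟩ := hP.exists_piece_of_connIn_compl hends hp hvp hpath
  obtain h | h := Sym2.mem_iff.1 (hends q hq hvq ▸ hP.mem_ends_of_terminal q hq t htq htT)
  exacts [hvt h.symm, hct h.symm]

theorem exists_simplicial_end (hP : IsDecomposition G β VS ES T P) (hβ : HasSimplicialVertices β)
    (hT : ∃ n, T ⊆ β n) {p : DSPPiece G} (hp : p ∈ P) {v : G.V} (hv : v ∈ p.ends) (hvT : v ∉ T) :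
    ∃ r ∈ P, ∃ w ∈ r.ends, w ∉ T ∧
      ∃ n, w ∈ β n ∧ ∀ q ∈ P, w ∈ q.ends → ∀ u ∈ q.ends, u ∈ β n := by
  classical
  let A : Finset G.V := P.biUnion fun p => p.ends.toFinset
  have mem_A : ∀ u, u ∈ A ↔ ∃ q ∈ P, u ∈ q.ends := by simp [A]
  obtain ⟨w, hwA, hwT, n, hwn, hn⟩ := hβ.exists_notMem (A := A) hT
    fun h => hvT (h ((mem_A v).2 ⟨p, hp, hv⟩))
  obtain ⟨r, hr, hwr⟩ := (mem_A w).1 hwA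
  refine ⟨r, hr, w, hwr, hwT, n, hwn, fun q hq hwq u huq => ?_⟩
  obtain ⟨m, hm⟩ := hP.exists_bag q hq
  exact hn u ((mem_A u).2 ⟨q, hq, huq⟩) m (hm u huq) (hm w hwq)

theorem exists_card_lt_of_end_notMem (hP : IsDecomposition G β VS ES T P)
    (hβ : HasSimplicialVertices β) (hβ_card : ∀ n, (β n).Finite ∧ (β n).ncard ≤ 3)
    (hconn : ConnSub G VS ES) (hcut : ¬ ∃ w, CutvertexIn G VS ES w) (hTS : T ⊆ VS)
    (hT : T.Nontrivial) (hT_bag : ∃ n, T ⊆ β n) {p : DSPPiece G} (hp : p ∈ P) {v : G.V}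
    (hv : v ∈ p.ends) (hvT : v ∉ T)
    (hsimple : ∀ p ∈ P, ∀ q ∈ P, p.ends = q.ends → p = q) :
    ∃ P', IsDecomposition G β VS ES T P' ∧ P'.card < P.card := by
  obtain ⟨p, hp, v, hvp, hvT, n, hvn, hn⟩ := hP.exists_simplicial_end hβ hT_bag hp hv hvT
  obtain ⟨b, hpb⟩ := Sym2.mem_iff_exists.1 hvp
  obtain ⟨t, htT, htb⟩ := hT.exists_ne b
  obtain ⟨q, hq, hvq, hbq⟩ := hP.exists_piece_avoiding hconn hcut hp hpb (hTS htT) htT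
    (fun h => hvT (h ▸ htT)) htb.symm
  obtain ⟨c, hqc⟩ := Sym2.mem_iff_exists.1 hvq
  have hbc : b ≠ c := fun h => hbq (hqc ▸ h ▸ Sym2.mem_mk_right v b)
  have hbn : b ∈ β n := hn p hp hvp b (hpb ▸ Sym2.mem_mk_right v b)
  have hcn : c ∈ β n := hn q hq hvq c (hqc ▸ Sym2.mem_mk_right v c)
  have hcard : ({v, b, c} : Set G.V).ncard = 3 :=
    Set.ncard_eq_three.2 ⟨v, b, c, p.ne_of_ends_eq hpb, q.ne_of_ends_eq hqc, hbc, rfl⟩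
  have hbag : {v, b, c} = β n := Set.eq_of_subset_of_ncard_le
    (by simp [Set.insert_subset_iff, hvn, hbn, hcn]) (hcard ▸ (hβ_card n).2) (hβ_card n).1
  -- Width 2 leaves no room in the bag for a third neighbour of `v`.
  have honly : ∀ s ∈ P, v ∈ s.ends → s = p ∨ s = q := by
    intro s hs hvs
    obtain ⟨d, hsd⟩ := Sym2.mem_iff_exists.1 hvs
    obtain rfl | rfl | rfl : d ∈ ({v, b, c} : Set G.V) :=
      hbag ▸ hn s hs hvs d (hsd ▸ Sym2.mem_mk_right v d)
    · exact (s.ne_of_ends_eq hsd rfl).elim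
    · exact .inl (hsimple s hs p hp (hsd.trans hpb.symm))
    · exact .inr (hsimple s hs q hq (hsd.trans hqc.symm))
  exact hP.exists_card_lt_of_series hp hq hpb hqc hbc hvT honly ⟨n, hbn, hcn⟩

theorem exists_card_lt {x y : G.V} (hP : IsDecomposition G β VS ES {x, y} P)
    (hβ : HasSimplicialVertices β) (hβ_card : ∀ n, (β n).Finite ∧ (β n).ncard ≤ 3)
    (hconn : ConnSub G VS ES) (hcut : ¬ ∃ w, CutvertexIn G VS ES w) (hx : x ∈ VS) (hy : y ∈ VS)
    (hxy : x ≠ y) (hbag : ∃ n, x ∈ β n ∧ y ∈ β n) (hcard : 1 < P.card) :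
    ∃ P', IsDecomposition G β VS ES {x, y} P' ∧ P'.card < P.card := by
  by_cases hsimple : ∀ p ∈ P, ∀ q ∈ P, p.ends = q.ends → p = q
  · obtain ⟨p, hp, q, hq, hpq⟩ := Finset.one_lt_card.1 hcard
    obtain ⟨s, hs, v, hvs, hv⟩ : ∃ s ∈ P, ∃ v ∈ s.ends, v ∉ ({x, y} : Set G.V) := by
      by_contra! hall
      have hends : ∀ s ∈ P, s.ends = s(x, y) := fun s hs => by
        induction hs' : s.ends with | _ a b =>
        have ha := hall s hs a (hs' ▸ Sym2.mem_mk_left a b)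
        have hb := hall s hs b (hs' ▸ Sym2.mem_mk_right a b)
        have hab := s.ne_of_ends_eq hs'
        grind
      exact hpq (hsimple p hp q hq ((hends p hp).trans (hends q hq).symm))
    exact hP.exists_card_lt_of_end_notMem hβ hβ_card hconn hcut (Set.pair_subset hx hy)
      (Set.nontrivial_pair hxy) (hbag.imp fun _ h => Set.pair_subset h.1 h.2) hs hvs hv hsimple
  · push Not at hsimple
    obtain ⟨p, hp, q, hq, hends, hpq⟩ := hsimple
    exact hP.exists_card_lt_of_ends_eq hp hq hpq hends

theorem isDSP_of_card_le_one {x y : G.V} (hP : IsDecomposition G β VS ES {x, y} P)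
    (hcard : P.card ≤ 1) (hsub : IsSub G VS ES) (hx : x ∈ VS) (hy : y ∈ VS) (hxy : x ≠ y) :
    IsDSP (subG2 G VS ES hsub x y hx hy) := by
  obtain ⟨p, hp, -⟩ := (hP.mem_verts_iff x).1 hx
  obtain rfl : P = {p} :=
    Finset.eq_singleton_iff_unique_mem.2 ⟨hp, fun q hq => Finset.card_le_one.1 hcard q hq p hp⟩
  obtain rfl : VS = p.verts := Set.ext fun u => by simp [hP.mem_verts_iff u]
  obtain rfl : ES = p.edges := Set.ext fun e => by simp [hP.mem_edges_iff e]
  exact p.isDSP x y hx hy ((Sym2.mem_and_mem_iff hxy).1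
    ⟨hP.mem_ends_of_terminal p hp x hx (.inl rfl), hP.mem_ends_of_terminal p hp y hy (.inr rfl)⟩)

end IsDecomposition

theorem block_is_atomic_dsp_general {L : Type} (G : BGraph L) (htw : TWle2 G) {VS : Set G.V}
    {ES : Set G.E} (hsub : IsSub G VS ES) (hconn : ConnSub G VS ES)
    (hcut : ¬ ∃ w, CutvertexIn G VS ES w) (hES : ES.Finite)
    (hsl : ∀ e ∈ ES, (G.att e).1 ≠ (G.att e).2) {x y : G.V} (hxy : adjIn G VS ES x y) :
    IsDSP (subG2 G VS ES hsub x y hxy.1 hxy.2.1) ∧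
      ∀ H₁ H₂ : G2 L, IsDSP H₁ → IsDSP H₂ →
        ¬ Nonempty (GIso (subG2 G VS ES hsub x y hxy.1 hxy.2.1) (serG H₁ H₂)) := by
  obtain ⟨e, he, hexy⟩ := hxy.exists_edge
  have hne : x ≠ y := hxy.ne hsl
  obtain ⟨hx, hy, -⟩ := hxy
  refine ⟨?_, fun H₁ H₂ h₁ h₂ => (joinsSources_subG2 hsub hx hy he hexy).not_giso_serG h₁ h₂⟩
  obtain ⟨N, β, hβ, hedge, hcard⟩ := htw.exists_hasSimplicialVertices
  have hbag : ∃ n, x ∈ β n ∧ y ∈ β n := (hedge e).imp fun _ h =>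
    Sym2.forall_mem_pair.1 (hexy ▸ Sym2.forall_mem_pair.2 h)
  have hcov : ∀ u ∈ VS, ∃ v, adjIn G VS ES u v := fun u hu =>
    hconn.exists_adjIn ⟨x, hx, y, hy, hne⟩ hu
  obtain ⟨P, hP, hmin⟩ := exists_minimalFor_of_wellFoundedLT (IsDecomposition G β VS ES {x, y})
    Finset.card (IsDecomposition.exists_of_singles hsub hES hsl hcov (fun e _ => hedge e) {x, y})
  have hP_card : P.card ≤ 1 := by
    by_contra! h
    obtain ⟨P', hP', hlt⟩ := hP.exists_card_lt hβ hcard hconn hcut hx hy hne hbag h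
    exact hlt.not_ge (hmin hP' hlt.le)
  exact hP.isDSP_of_card_le_one hP_card hsub hx hy hne

/-- in a connected graph of tree-width at most 2 without
self-loops, for every nontrivial block `B` and every vertex `x` of `B` there
is a vertex `y` of `B`, joined to `x` by an edge of `B`, such that `B` with
1-source `x` and 2-source `y` is a ∘-atomic disoriented series-parallel
graph. -/
theorem block_is_atomic_dsp {L : Type} (G : BGraph L) [Finite G.V] [Finite G.E]
    (hsl : ∀ e : G.E, (G.att e).1 ≠ (G.att e).2)
    (hconn : ∀ u v : G.V, connIn G Set.univ Set.univ u v)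
    (htw : TWle2 G)
    (VS : Set G.V) (ES : Set G.E) (hblk : IsBlock G VS ES)
    (hnt : ∃ a ∈ VS, ∃ b ∈ VS, a ≠ b)
    (x : G.V) (hx : x ∈ VS) :
    ∃ y : G.V, ∃ hy : y ∈ VS, y ≠ x ∧
      (∃ e ∈ ES, G.att e = (x, y) ∨ G.att e = (y, x)) ∧
      IsDSP (subG2 G VS ES hblk.1 x y hx hy) ∧
      (∀ H₁ H₂ : G2 L, IsDSP H₁ → IsDSP H₂ →
        ¬ Nonempty (GIso (subG2 G VS ES hblk.1 x y hx hy) (serG H₁ H₂))) := by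
  obtain ⟨hsub, hblk_conn, hcut, -⟩ := hblk
  obtain ⟨y, hxy⟩ := hblk_conn.exists_adjIn hnt hx
  exact ⟨y, hxy.2.1, (hxy.ne fun e _ => hsl e).symm, hxy.2.2,
    block_is_atomic_dsp_general G htw hsub hblk_conn hcut ES.toFinite (fun e _ => hsl e) hxy⟩
end
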